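/- arXiv:1602.02973 — 5 statements merged into one kernel-verified Lean document; each statement's English description precedes it below -/
import Mathlib

section
/- Let f : ℂ^k → ℂ^k be continuous and let Λ : ℂ^s → ℂ^s be the diagonal linear map with diagonal entries λ_1, …, λ_s ∈ ℂ satisfying 0 < |λ_j| < 1 for all j. Suppose P : D_s → ℂ^k is analytic, the derivative DP(0) : ℂ^s → ℂ^k is injective, and f(P(z)) = P(Λz) for all z ∈ D_s. Then P is injective on D_s. -/
/-!
An injective differential makes `P` injective near the fixed point. If `P z = P w`, applying `f`
repeatedly gives `P (Λⁿ z) = P (Λⁿ w)` for all `n`; since both orbits converge to the fixed point,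
local injectivity forces `Λⁿ z = Λⁿ w` for large `n`, and then `z = w` because `Λ` is injective.
-/

open Asymptotics Filter Function Set Topology

section Dynamics

variable {X Y : Type*} {U : Set X} {T : X → X} {f : Y → Y} {P : X → Y}

theorem eqOn_iterate_comp (hT : MapsTo T U U) (hconj : EqOn (f ∘ P) (P ∘ T) U) (n : ℕ) :
    EqOn (f^[n] ∘ P) (P ∘ T^[n]) U := by
  induction n with
  | zero => exact fun _ _ ↦ rfl
  | succ n ih => exact fun _ hz ↦ (congrArg f^[n] (hconj hz)).trans (ih (hT hz))

theorem injOn_of_injOn_nhds_of_tendsto_iterate [TopologicalSpace X] {x₀ : X} {V : Set X}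
    (hV : V ∈ 𝓝 x₀) (hPV : InjOn P V) (hT : MapsTo T U U) (hT_inj : InjOn T U)
    (hT_lim : ∀ z ∈ U, Tendsto (fun n ↦ T^[n] z) atTop (𝓝 x₀))
    (hconj : EqOn (f ∘ P) (P ∘ T) U) : InjOn P U := by
  intro z hz w hw hzw
  obtain ⟨n, hzV, hwV⟩ : ∃ n, T^[n] z ∈ V ∧ T^[n] w ∈ V :=
    (((hT_lim z hz).eventually_mem hV).and ((hT_lim w hw).eventually_mem hV)).exists
  have hPn : P (T^[n] z) = P (T^[n] w) :=
    calc P (T^[n] z) = f^[n] (P z) := (eqOn_iterate_comp hT hconj n hz).symm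
      _ = f^[n] (P w) := by rw [hzw]
      _ = P (T^[n] w) := eqOn_iterate_comp hT hconj n hw
  exact hT_inj.iterate hT n hz hw (hPV hzV hwV hPn)

end Dynamics

section StrictDerivative

variable {𝕜 E F : Type*} [NontriviallyNormedField 𝕜] [NormedAddCommGroup E] [NormedSpace 𝕜 E]
  [NormedAddCommGroup F] [NormedSpace 𝕜 F] {P : E → F} {P' : E →L[𝕜] F} {x₀ : E}

theorem isBigO_sub_of_hasStrictFDerivAt_of_antilipschitz (hP : HasStrictFDerivAt P P' x₀)
    (hP' : ∃ K, AntilipschitzWith K P') :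
    (fun p : E × E ↦ p.1 - p.2) =O[𝓝 (x₀, x₀)] fun p ↦ P p.1 - P p.2 := by
  obtain ⟨K, hK⟩ := hP'
  have hlin : (fun p : E × E ↦ p.1 - p.2) =O[𝓝 (x₀, x₀)] fun p ↦ P' (p.1 - p.2) :=
    .of_bound K <| .of_forall fun p ↦ P'.bound_of_antilipschitz hK (p.1 - p.2)
  have hequiv : (fun p : E × E ↦ P p.1 - P p.2) ~[𝓝 (x₀, x₀)] fun p ↦ P' (p.1 - p.2) :=
    hP.isLittleO.trans_isBigO hlin
  exact hlin.trans hequiv.isBigO_symm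

theorem exists_mem_nhds_injOn_of_hasStrictFDerivAt (hP : HasStrictFDerivAt P P' x₀)
    (hP' : ∃ K, AntilipschitzWith K P') : ∃ V ∈ 𝓝 x₀, InjOn P V := by
  have hinj : ∀ᶠ p : E × E in 𝓝 x₀ ×ˢ 𝓝 x₀, P p.1 = P p.2 → p.1 = p.2 := by
    simpa only [sub_eq_zero, nhds_prod_eq] using
      (isBigO_sub_of_hasStrictFDerivAt_of_antilipschitz hP hP').eq_zero_imp
  obtain ⟨V, hV, hPV⟩ := mem_prod_same_iff.1 hinj
  exact ⟨V, hV, fun z hz w hw ↦ hPV (mk_mem_prod hz hw)⟩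

theorem parameterization_injective_general {U : Set E} {T : E → E} {f : F → F}
    (hT : MapsTo T U U) (hT_inj : InjOn T U)
    (hT_lim : ∀ z ∈ U, Tendsto (fun n ↦ T^[n] z) atTop (𝓝 x₀))
    (hP : HasStrictFDerivAt P P' x₀) (hP' : ∃ K, AntilipschitzWith K P')
    (hconj : EqOn (f ∘ P) (P ∘ T) U) : InjOn P U := by
  obtain ⟨V, hV, hPV⟩ := exists_mem_nhds_injOn_of_hasStrictFDerivAt hP hP'
  exact injOn_of_injOn_nhds_of_tendsto_iterate hV hPV hT hT_inj hT_lim hconj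

end StrictDerivative

section DiagonalContraction

variable {ι R : Type*} [SeminormedRing R] {a : ι → R}

theorem mapsTo_mul_polydisk (ha : ∀ i, ‖a i‖ ≤ 1) (r : ℝ) :
    MapsTo (a * ·) {z | ∀ i, ‖z i‖ < r} {z | ∀ i, ‖z i‖ < r} := fun z hz i ↦
  calc ‖a i * z i‖ ≤ ‖a i‖ * ‖z i‖ := norm_mul_le _ _
    _ ≤ ‖z i‖ := mul_le_of_le_one_left (norm_nonneg _) (ha i)
    _ < r := hz i

theorem tendsto_iterate_mul_nhds_zero (ha : ∀ i, ‖a i‖ < 1) (z : ι → R) :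
    Tendsto (fun n ↦ (a * ·)^[n] z) atTop (𝓝 0) := by
  simp only [mul_left_iterate]
  refine tendsto_pi_nhds.2 fun i ↦ ?_
  simpa using (tendsto_pow_atTop_nhds_zero_of_norm_lt_one (ha i)).mul_const (z i)

end DiagonalContraction

/-- An analytic parameterization `P` of the unit polydisk solving the invariance
equation `f ∘ P = P ∘ Λ`, where `Λ` is diagonal with entries `λ_j`, `0 < |λ_j| < 1`, and whose
differential at `0` is injective, is injective on the whole unit polydisk. -/
theorem parameterization_injective
    {k s : ℕ} (f : (Fin k → ℂ) → (Fin k → ℂ)) (hf : Continuous f)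
    (lam : Fin s → ℂ) (hlam : ∀ j, 0 < ‖lam j‖ ∧ ‖lam j‖ < 1)
    (P : (Fin s → ℂ) → (Fin k → ℂ))
    (hP : AnalyticOnNhd ℂ P {z | ∀ j, ‖z j‖ < 1})
    (hDP : Function.Injective (fderiv ℂ P 0))
    (hconj : ∀ z ∈ {z : Fin s → ℂ | ∀ j, ‖z j‖ < 1},
      f (P z) = P (fun j => lam j * z j)) :
    Set.InjOn P {z | ∀ j, ‖z j‖ < 1} := by
  have hlam_unit : IsUnit lam := Pi.isUnit_iff.2 fun j ↦ (norm_pos_iff.1 (hlam j).1).isUnit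
  have hDP_antilipschitz : ∃ K, AntilipschitzWith K (fderiv ℂ P 0) :=
    ((fderiv ℂ P 0).toLinearMap.injective_iff_antilipschitz.1 hDP).imp fun _ ↦ And.right
  exact parameterization_injective_general (mapsTo_mul_polydisk (fun j ↦ (hlam j).2.le) 1)
    hlam_unit.mul_right_injective.injOn
    (fun z _ ↦ tendsto_iterate_mul_nhds_zero (fun j ↦ (hlam j).2) z)
    (hP 0 (by simp)).hasStrictFDerivAt hDP_antilipschitz hconj
end

section
/- (Interval Newton method with parameter.) Let m > k, let F : ℝ^m → ℝ^k be C¹, let X = Π_{i=1}^{m−k}[a_i,b_i] ⊂ ℝ^{m−k} and Y = Π_{i=1}^{k}[c_i,d_i] ⊂ ℝ^k be compact boxes, and let y_0 ∈ int Y. For x ∈ ℝ^{m−k} write F_x(y) = F(x,y). Suppose every matrix M ∈ [D_y F(X×Y)] (the interval hull over X×Y of the k×k Jacobian of F in the y-variables) is invertible, and that for every x ∈ X and every M ∈ [D_y F(X×Y)], the point y_0 − M^{-1} F(x, y_0) lies in int Y. Then there exists a function q : X → Y such that F(x, q(x)) = 0 for all x ∈ X. -/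
open Set Matrix

/-!
Fix `x` and write `f = F (x, ·)`. Applying the mean value theorem to each coordinate of `f` gives
`f y - f y₀ = M (y - y₀)`, where row `i` of `M` is row `i` of the Jacobian of `f` at a point `zᵢ`
that depends on `i`; such an `M` lies in the interval hull. Move along the segment from `f y₀`
to `0`. If `f y = (1 - t) f y₀` with `t < 1`, then `y = (1 - t) y₀ + t (y₀ - M⁻¹ f y₀)` is interior
to `Y`, and there `f` is open because its Jacobian is invertible. So the closed set `f(Y)` is a
neighbourhood of each of its points on the segment other than `0`, and hence contains `0`.
-/

open scoped Topology

section Matrices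

variable {α β ι κ R : Type*}

/-- The matrices each of whose rows is the corresponding row of `J z` for some `z ∈ s`, where `z`
may vary from row to row. When `J` is the Jacobian of a map, these are the matrices produced by
the coordinatewise mean value theorem. -/
def rowSelections (J : α → Matrix κ ι R) (s : Set α) : Set (Matrix κ ι R) :=
  {M | ∀ i, ∃ z ∈ s, M i = J z i}

/-- The interval hull `[J(s)]` of a matrix-valued function `J` over `s`. It is meaningful only if
the entries of `J` are bounded on the nonempty set `s`, since `sInf` and `sSup` are otherwise
unspecified. -/
def intervalHull [ConditionallyCompleteLattice R] (J : α → Matrix κ ι R) (s : Set α) :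
    Set (Matrix κ ι R) :=
  {M | ∀ i j, M i j ∈ Icc (sInf ((fun z => J z i j) '' s)) (sSup ((fun z => J z i j) '' s))}

theorem apply_mem_rowSelections {J : α → Matrix κ ι R} {s : Set α} {z : α} (hz : z ∈ s) :
    J z ∈ rowSelections J s :=
  fun _ => ⟨z, hz, rfl⟩

theorem rowSelections_comp_subset {J : α → Matrix κ ι R} {g : β → α} {s : Set β} {t : Set α}
    (hg : MapsTo g s t) : rowSelections (J ∘ g) s ⊆ rowSelections J t := by
  intro M hM i
  obtain ⟨z, hz, hMz⟩ := hM i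
  exact ⟨g z, hg hz, hMz⟩

theorem rowSelections_subset_intervalHull [ConditionallyCompleteLattice R]
    {J : α → Matrix κ ι R} {s : Set α} (hbelow : ∀ i j, BddBelow ((fun z => J z i j) '' s))
    (habove : ∀ i j, BddAbove ((fun z => J z i j) '' s)) :
    rowSelections J s ⊆ intervalHull J s := by
  intro M hM i j
  obtain ⟨z, hz, hMz⟩ := hM i
  rw [hMz]
  exact ⟨csInf_le (hbelow i j) (mem_image_of_mem _ hz),
    le_csSup (habove i j) (mem_image_of_mem _ hz)⟩

theorem rowSelections_subset_intervalHull_of_isCompact [TopologicalSpace α] [Nonempty R]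
    [ConditionallyCompleteLinearOrder R] [TopologicalSpace R] [OrderTopology R]
    {J : α → Matrix κ ι R} {s : Set α} (hs : IsCompact s) (hJ : ContinuousOn J s) :
    rowSelections J s ⊆ intervalHull J s := by
  have hcompact (i j) : IsCompact ((fun z => J z i j) '' s) :=
    hs.image_of_continuousOn ((continuous_apply_apply i j).comp_continuousOn hJ)
  exact rowSelections_subset_intervalHull (fun i j => (hcompact i j).bddBelow)
    (fun i j => (hcompact i j).bddAbove)

theorem eq_lineMap_sub_inv_mulVec [Fintype ι] [DecidableEq ι] [CommRing R] {M : Matrix ι ι R}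
    (hM : IsUnit M) {x y u : ι → R} {t : R} (h : AffineMap.lineMap u 0 t - u = M *ᵥ (y - x)) :
    y = AffineMap.lineMap x (x - M⁻¹ *ᵥ u) t := by
  have hdet : IsUnit M.det := M.isUnit_iff_isUnit_det.1 hM
  have hdiff : y - x = t • -(M⁻¹ *ᵥ u) := calc
    y - x = M⁻¹ *ᵥ (M *ᵥ (y - x)) := by rw [mulVec_mulVec, nonsing_inv_mul M hdet, one_mulVec]
    _ = M⁻¹ *ᵥ (t • -u) := by rw [← h, AffineMap.lineMap_apply_module']; simp
    _ = t • -(M⁻¹ *ᵥ u) := by rw [mulVec_smul, mulVec_neg]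
  rw [AffineMap.lineMap_apply_module', sub_sub_cancel_left, ← hdiff, sub_add_cancel]

end Matrices

theorem apply_mem_of_isClosed_of_mem_nhds {T Z : Type*} [ConditionallyCompleteLinearOrder T]
    [DenselyOrdered T] [TopologicalSpace T] [OrderTopology T] [TopologicalSpace Z] {A : Set Z}
    {γ : T → Z} {a b : T} (hab : a ≤ b) (hA : IsClosed A) (hγ : Continuous γ) (ha : γ a ∈ A)
    (h : ∀ t ∈ Ico a b, γ t ∈ A → A ∈ 𝓝 (γ t)) : γ b ∈ A := by
  have hclosed : IsClosed (γ ⁻¹' A ∩ Icc a b) := (hA.preimage hγ).inter isClosed_Icc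
  refine hclosed.Icc_subset_of_forall_mem_nhdsWithin ha ?_ (right_mem_Icc.2 hab)
  rintro t ⟨hmem, ht⟩
  exact mem_nhdsWithin_of_mem_nhds (hγ.continuousAt.preimage_mem_nhds (h t ht hmem))

theorem image_mem_nhds_of_hasFDerivWithinAt {E G : Type*} [NormedAddCommGroup E]
    [NormedSpace ℝ E] [CompleteSpace E] [NormedAddCommGroup G] [NormedSpace ℝ G]
    [CompleteSpace G] {f : E → G} {f' : E → E →L[ℝ] G} {s : Set E} {y : E}
    (hf : ∀ z ∈ s, HasFDerivWithinAt f (f' z) s z) (hf' : ContinuousOn f' s)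
    (hy : y ∈ interior s) (hsurj : Function.Surjective (f' y)) : f '' s ∈ 𝓝 (f y) := by
  have hys : s ∈ 𝓝 y := mem_interior_iff_mem_nhds.1 hy
  have hderiv : ∀ᶠ z in 𝓝 y, HasFDerivAt f (f' z) z := by
    filter_upwards [eventually_mem_nhds_iff.2 hys] with z hz
    exact (hf z (mem_of_mem_nhds hz)).hasFDerivAt hz
  have hstrict : HasStrictFDerivAt f (f' y) y :=
    hasStrictFDerivAt_of_hasFDerivAt_of_continuousAt hderiv (hf'.continuousAt hys)
  rw [← hstrict.map_nhds_eq_of_surj (LinearMap.range_eq_top.2 hsurj)]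
  exact Filter.image_mem_map hys

theorem exists_mem_rowSelections_sub_eq_mulVec {ι κ : Type*} [Fintype ι] [DecidableEq ι]
    {f : (ι → ℝ) → κ → ℝ} {f' : (ι → ℝ) → (ι → ℝ) →L[ℝ] (κ → ℝ)} {s : Set (ι → ℝ)} {x y : ι → ℝ}
    (hf : ∀ z ∈ s, HasFDerivWithinAt f (f' z) s z) (hs : Convex ℝ s) (hx : x ∈ s) (hy : y ∈ s) :
    ∃ M ∈ rowSelections (fun z => (f' z).toLinearMap.toMatrix') s, f y - f x = M *ᵥ (y - x) := by
  have hrow (i : κ) : ∃ z ∈ s, f y i - f x i = f' z (y - x) i := by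
    obtain ⟨z, hz, heq⟩ :=
      domain_mvt (fun z hz => hasFDerivWithinAt_pi'.1 (hf z hz) i) hs hx hy
    exact ⟨z, hs.segment_subset hx hy hz, heq⟩
  choose z hz heq using hrow
  refine ⟨of fun i => (f' (z i)).toLinearMap.toMatrix' i, fun i => ⟨z i, hz i, rfl⟩, ?_⟩
  ext i
  rw [Pi.sub_apply, heq, ← ContinuousLinearMap.coe_coe, ← LinearMap.toMatrix'_mulVec]
  rfl

section Newton

variable {ι : Type*} [Fintype ι] [DecidableEq ι]

theorem exists_mem_eq_zero_of_newton_mem_interior {f : (ι → ℝ) → ι → ℝ}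
    {f' : (ι → ℝ) → (ι → ℝ) →L[ℝ] (ι → ℝ)} {Y : Set (ι → ℝ)} {y₀ : ι → ℝ}
    (hY : IsCompact Y) (hYconv : Convex ℝ Y) (hf : ∀ y ∈ Y, HasFDerivWithinAt f (f' y) Y y)
    (hf' : ContinuousOn f' Y) (hy₀ : y₀ ∈ interior Y)
    (hinv : ∀ M ∈ rowSelections (fun y => (f' y).toLinearMap.toMatrix') Y, IsUnit M)
    (hNewton : ∀ M ∈ rowSelections (fun y => (f' y).toLinearMap.toMatrix') Y,
      y₀ - M⁻¹ *ᵥ f y₀ ∈ interior Y) :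
    ∃ y ∈ Y, f y = 0 := by
  have hy₀Y : y₀ ∈ Y := interior_subset hy₀
  have hclosed : IsClosed (f '' Y) :=
    (hY.image_of_continuousOn fun y hy => (hf y hy).continuousWithinAt).isClosed
  have hstart : AffineMap.lineMap (f y₀) 0 (0 : ℝ) ∈ f '' Y := by
    rw [AffineMap.lineMap_apply_zero]
    exact mem_image_of_mem f hy₀Y
  suffices hopen : ∀ t ∈ Ico (0 : ℝ) 1, AffineMap.lineMap (f y₀) 0 t ∈ f '' Y →
      f '' Y ∈ 𝓝 (AffineMap.lineMap (f y₀) 0 t) by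
    simpa using apply_mem_of_isClosed_of_mem_nhds zero_le_one hclosed
      AffineMap.lineMap_continuous hstart hopen
  rintro t ht ⟨y, hy, hfy⟩
  have hinterior : y ∈ interior Y := by
    obtain ⟨M, hM, hsecant⟩ := exists_mem_rowSelections_sub_eq_mulVec hf hYconv hy₀Y hy
    rw [hfy] at hsecant
    rw [eq_lineMap_sub_inv_mulVec (hinv M hM) hsecant]
    exact hYconv.interior.lineMap_mem hy₀ (hNewton M hM) (Ico_subset_Icc_self ht)
  have hsurj : Function.Surjective (f' y) := by
    have hunit := LinearMap.isUnit_toMatrix'_iff.1 (hinv _ (apply_mem_rowSelections hy))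
    exact ((Module.End.isUnit_iff _).1 hunit).surjective
  rw [← hfy]
  exact image_mem_nhds_of_hasFDerivWithinAt hf hf' hinterior hsurj

theorem interval_newton_with_parameter_general {P : Type*} {F : P × (ι → ℝ) → ι → ℝ}
    {F' : P × (ι → ℝ) → (ι → ℝ) →L[ℝ] (ι → ℝ)} {X : Set P} {Y : Set (ι → ℝ)} {y₀ : ι → ℝ}
    (hY : IsCompact Y) (hYconv : Convex ℝ Y)
    (hF : ∀ x ∈ X, ∀ y ∈ Y, HasFDerivWithinAt (fun y => F (x, y)) (F' (x, y)) Y y)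
    (hF' : ∀ x ∈ X, ContinuousOn (fun y => F' (x, y)) Y) (hy₀ : y₀ ∈ interior Y)
    (hinv : ∀ M ∈ rowSelections (fun p => (F' p).toLinearMap.toMatrix') (X ×ˢ Y), IsUnit M)
    (hNewton : ∀ x ∈ X, ∀ M ∈ rowSelections (fun p => (F' p).toLinearMap.toMatrix') (X ×ˢ Y),
      y₀ - M⁻¹ *ᵥ F (x, y₀) ∈ interior Y) :
    ∃ q : P → ι → ℝ, ∀ x ∈ X, q x ∈ Y ∧ F (x, q x) = 0 := by
  have hzero (x) (hx : x ∈ X) : ∃ y ∈ Y, F (x, y) = 0 := by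
    have hsub := rowSelections_comp_subset (J := fun p => (F' p).toLinearMap.toMatrix')
      (g := Prod.mk x) fun y (hy : y ∈ Y) => mk_mem_prod hx hy
    exact exists_mem_eq_zero_of_newton_mem_interior hY hYconv (hF x hx) (hF' x hx) hy₀
      (fun M hM => hinv M (hsub hM)) (fun M hM => hNewton x hx M (hsub hM))
  choose! q hq using hzero
  exact ⟨q, hq⟩

end Newton

/-- Interval Newton method with parameter (Theorem 4.3 of the paper).
If every matrix `M` in the interval hull of the `y`-Jacobian of `F` over the box `X × Y`
is invertible, and the Newton image `y₀ - M⁻¹ F(x, y₀)` lies in the interior of `Y` for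
every `x ∈ X` and every such `M`, then there is `q : X → Y` with `F(x, q(x)) = 0` on `X`. -/
theorem interval_newton_with_parameter
    {m k : ℕ} (hmk : k < m)
    (F : ((Fin (m - k) → ℝ) × (Fin k → ℝ)) → (Fin k → ℝ))
    (hF : ContDiff ℝ 1 F)
    (a b : Fin (m - k) → ℝ) (c d : Fin k → ℝ)
    (X : Set (Fin (m - k) → ℝ)) (hX : X = univ.pi fun i => Icc (a i) (b i))
    (Y : Set (Fin k → ℝ)) (hY : Y = univ.pi fun i => Icc (c i) (d i))
    (y0 : Fin k → ℝ) (hy0 : y0 ∈ interior Y)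
    (hull : Set (Matrix (Fin k) (Fin k) ℝ))
    (hhull : hull = {M | ∀ i j, M i j ∈ Icc
      (sInf ((fun q => fderiv ℝ F q ((0 : Fin (m - k) → ℝ), Pi.single j 1) i) '' (X ×ˢ Y)))
      (sSup ((fun q => fderiv ℝ F q ((0 : Fin (m - k) → ℝ), Pi.single j 1) i) '' (X ×ˢ Y)))})
    (hinv : ∀ M ∈ hull, IsUnit M)
    (hNewton : ∀ x ∈ X, ∀ M ∈ hull, y0 - M⁻¹ *ᵥ F (x, y0) ∈ interior Y) :
    ∃ q : (Fin (m - k) → ℝ) → (Fin k → ℝ), ∀ x ∈ X, q x ∈ Y ∧ F (x, q x) = 0 := by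
  subst hX hY hhull
  have hYc : IsCompact (univ.pi fun i => Icc (c i) (d i)) :=
    isCompact_univ_pi fun _ => isCompact_Icc
  have hXc : IsCompact (univ.pi fun i => Icc (a i) (b i)) :=
    isCompact_univ_pi fun _ => isCompact_Icc
  have hF' : Continuous fun p => (fderiv ℝ F p).comp (.inr ℝ (Fin (m - k) → ℝ) (Fin k → ℝ)) :=
    (hF.continuous_fderiv one_ne_zero).clm_comp continuous_const
  have hJ : Continuous fun p => ((fderiv ℝ F p).comp
      (.inr ℝ (Fin (m - k) → ℝ) (Fin k → ℝ))).toLinearMap.toMatrix' :=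
    continuous_matrix fun i j => (continuous_apply i).comp (hF'.clm_apply continuous_const)
  -- The entries of these matrices unfold to the partial derivatives that bound the hull.
  have hsub := rowSelections_subset_intervalHull_of_isCompact (hXc.prod hYc) hJ.continuousOn
  refine interval_newton_with_parameter_general hYc (convex_pi fun i _ => convex_Icc _ _)
    (fun x _ y _ => ?_) (fun x _ => (hF'.comp (.prodMk_right x)).continuousOn) hy0
    (fun M hM => hinv M (hsub hM)) (fun x hx M hM => hNewton x hx M (hsub hM))
  exact ((hF.differentiable one_ne_zero (x, y)).hasFDerivAt.comp y
    (hasFDerivAt_prodMk_right x y)).hasFDerivWithinAt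
end

section
/- Under the assumptions of the directed interval Newton theorem (F : ℝ^m → ℝ^k C¹; A_1 an m×(m−k) matrix, A_2 an m×k matrix; X, Y compact boxes; every M ∈ [DF(S_{X,Y})] has M A_2 invertible; and the Newton inclusion holds so that there is a C¹ map q : X → Y with F(p* + A_1 x + A_2 q(x)) = 0 for all x ∈ X), the derivative of q satisfies, for every x in the interior of X: DF(p_x)(A_1 + A_2 Dq(x)) = 0 where p_x = p* + A_1 x + A_2 q(x), and consequently Dq(x) = −(DF(p_x) A_2)^{-1} DF(p_x) A_1. -/
open Set Matrix

/-- The Jacobian matrix of a map `F : ℝ^m → ℝ^k` at a point. -/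
noncomputable def jacobian {m k : ℕ} (F : (Fin m → ℝ) → (Fin k → ℝ)) (z : Fin m → ℝ) :
    Matrix (Fin k) (Fin m) ℝ :=
  Matrix.of fun i j => fderiv ℝ F z (Pi.single j 1) i

/-!
Differentiating `F (p_x) = 0` along `p_x = p* + A₁ x + A₂ q(x)` gives the first identity by the
chain rule. Since `p_x ∈ S_{X,Y}` and the partial derivatives of `F` are bounded on `S_{X,Y}`, the
Jacobian `DF(p_x)` belongs to the interval hull; hence `DF(p_x) A₂` is invertible and the first
identity can be solved for `Dq(x)`.
-/

section Jacobian

variable {l m n k : ℕ}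

theorem jacobian_eq_toMatrix' (F : (Fin m → ℝ) → (Fin k → ℝ)) (z : Fin m → ℝ) :
    jacobian F z = LinearMap.toMatrix' (fderiv ℝ F z : (Fin m → ℝ) →ₗ[ℝ] (Fin k → ℝ)) := by
  ext i j
  simp [jacobian, LinearMap.toMatrix'_apply]

theorem jacobian_comp {G : (Fin m → ℝ) → (Fin k → ℝ)} {F : (Fin l → ℝ) → (Fin m → ℝ)}
    {z : Fin l → ℝ} (hG : DifferentiableAt ℝ G (F z)) (hF : DifferentiableAt ℝ F z) :
    jacobian (fun w => G (F w)) z = jacobian G (F z) * jacobian F z := by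
  simp only [jacobian_eq_toMatrix', fderiv_fun_comp z hG hF, ContinuousLinearMap.toLinearMap_comp,
    LinearMap.toMatrix'_comp]

theorem jacobian_add {F G : (Fin m → ℝ) → (Fin k → ℝ)} {z : Fin m → ℝ}
    (hF : DifferentiableAt ℝ F z) (hG : DifferentiableAt ℝ G z) :
    jacobian (fun w => F w + G w) z = jacobian F z + jacobian G z := by
  simp only [jacobian_eq_toMatrix', fderiv_fun_add hF hG, ContinuousLinearMap.toLinearMap_add,
    map_add]

theorem jacobian_const_add (c : Fin k → ℝ) (F : (Fin m → ℝ) → (Fin k → ℝ)) (z : Fin m → ℝ) :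
    jacobian (fun w => c + F w) z = jacobian F z := by
  simp only [jacobian, fderiv_const_add]

theorem differentiable_mulVec (A : Matrix (Fin k) (Fin m) ℝ) :
    Differentiable ℝ fun z => A *ᵥ z :=
  A.mulVecLin.toContinuousLinearMap.differentiable

theorem jacobian_mulVec (A : Matrix (Fin k) (Fin m) ℝ) (z : Fin m → ℝ) :
    jacobian (fun w => A *ᵥ w) z = A := by
  have hderiv : fderiv ℝ (fun w => A *ᵥ w) z = A.mulVecLin.toContinuousLinearMap :=
    A.mulVecLin.toContinuousLinearMap.fderiv
  rw [jacobian_eq_toMatrix', hderiv]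
  exact LinearMap.toMatrix'_toLin' A

theorem jacobian_eq_zero_of_eventuallyEq_const {F : (Fin m → ℝ) → (Fin k → ℝ)} {z : Fin m → ℝ}
    {c : Fin k → ℝ} (h : F =ᶠ[nhds z] fun _ => c) : jacobian F z = 0 := by
  rw [jacobian_eq_toMatrix', h.fderiv_eq, fderiv_const_apply, ContinuousLinearMap.toLinearMap_zero,
    map_zero]

theorem jacobian_mul_jacobian_eq_zero {G : (Fin m → ℝ) → (Fin k → ℝ)}
    {F : (Fin l → ℝ) → (Fin m → ℝ)} {z : Fin l → ℝ} {c : Fin k → ℝ}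
    (hG : DifferentiableAt ℝ G (F z)) (hF : DifferentiableAt ℝ F z)
    (hconst : ∀ᶠ w in nhds z, G (F w) = c) : jacobian G (F z) * jacobian F z = 0 := by
  rw [← jacobian_comp hG hF, jacobian_eq_zero_of_eventuallyEq_const hconst]

theorem jacobian_const_add_mulVec_add_mulVec (p : Fin m → ℝ) (A₁ : Matrix (Fin m) (Fin n) ℝ)
    (A₂ : Matrix (Fin m) (Fin k) ℝ) {q : (Fin n → ℝ) → (Fin k → ℝ)} {x : Fin n → ℝ}
    (hq : DifferentiableAt ℝ q x) :
    jacobian (fun w => p + A₁ *ᵥ w + A₂ *ᵥ q w) x = A₁ + A₂ * jacobian q x := by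
  have hA₁ : DifferentiableAt ℝ (fun w => p + A₁ *ᵥ w) x :=
    (differentiable_mulVec A₁ x).const_add p
  have hA₂ : DifferentiableAt ℝ (fun w => A₂ *ᵥ q w) x := (differentiable_mulVec A₂ _).comp x hq
  rw [jacobian_add hA₁ hA₂, jacobian_const_add, jacobian_mulVec,
    jacobian_comp (differentiable_mulVec A₂ _) hq, jacobian_mulVec]

theorem jacobian_mul_add_mul_jacobian_eq_zero {F : (Fin m → ℝ) → (Fin l → ℝ)} {p : Fin m → ℝ}
    {A₁ : Matrix (Fin m) (Fin n) ℝ} {A₂ : Matrix (Fin m) (Fin k) ℝ}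
    {q : (Fin n → ℝ) → (Fin k → ℝ)} {x : Fin n → ℝ} {c : Fin l → ℝ}
    (hF : DifferentiableAt ℝ F (p + A₁ *ᵥ x + A₂ *ᵥ q x)) (hq : DifferentiableAt ℝ q x)
    (hconst : ∀ᶠ w in nhds x, F (p + A₁ *ᵥ w + A₂ *ᵥ q w) = c) :
    jacobian F (p + A₁ *ᵥ x + A₂ *ᵥ q x) * (A₁ + A₂ * jacobian q x) = 0 := by
  have hgraph : DifferentiableAt ℝ (fun w => p + A₁ *ᵥ w + A₂ *ᵥ q w) x :=
    ((differentiable_mulVec A₁ x).const_add p).add ((differentiable_mulVec A₂ _).comp x hq)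
  rw [← jacobian_const_add_mulVec_add_mulVec p A₁ A₂ hq]
  exact jacobian_mul_jacobian_eq_zero (F := fun w => p + A₁ *ᵥ w + A₂ *ᵥ q w) hF hgraph hconst

end Jacobian

theorem eq_neg_inv_mul_of_mul_add_mul_eq_zero {R ι κ ν : Type*} [CommRing R] [Fintype ι]
    [Fintype κ] [DecidableEq κ] {M : Matrix κ ι R} {A₁ : Matrix ι ν R} {A₂ : Matrix ι κ R}
    {Q : Matrix κ ν R} (hM : IsUnit (M * A₂)) (h : M * (A₁ + A₂ * Q) = 0) :
    Q = -((M * A₂)⁻¹ * (M * A₁)) := by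
  have hQ : M * A₂ * Q = -(M * A₁) := by
    rw [Matrix.mul_add, ← Matrix.mul_assoc] at h
    exact eq_neg_of_add_eq_zero_right h
  rw [← Matrix.mul_neg, ← hQ,
    Matrix.nonsing_inv_mul_cancel_left _ _ ((Matrix.isUnit_iff_isUnit_det _).mp hM)]

section IntervalHull

variable {m n k : ℕ}

/-- The set `S_{X,Y} = {p + A₁ x + A₂ y : x ∈ X, y ∈ Y}`: the columns of `A₁` are the directions
of the parameter `x`, those of `A₂` the directions in which `F = 0` is solved for `y`. -/
def directedSet (p : Fin m → ℝ) (A₁ : Matrix (Fin m) (Fin n) ℝ) (A₂ : Matrix (Fin m) (Fin k) ℝ)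
    (X : Set (Fin n → ℝ)) (Y : Set (Fin k → ℝ)) : Set (Fin m → ℝ) :=
  {z | ∃ x ∈ X, ∃ y ∈ Y, z = p + A₁ *ᵥ x + A₂ *ᵥ y}

/-- The interval hull `[DF(S)]`, the smallest interval matrix enclosing the Jacobians of `F` on `S`.
Its endpoints are real-valued `sInf` and `sSup`, hence meaningful only for partial derivatives that
are bounded on `S`. -/
def jacobianHull (F : (Fin m → ℝ) → (Fin k → ℝ)) (S : Set (Fin m → ℝ)) :
    Set (Matrix (Fin k) (Fin m) ℝ) :=
  {M | ∀ i j, M i j ∈ Icc (sInf ((fun z => jacobian F z i j) '' S))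
    (sSup ((fun z => jacobian F z i j) '' S))}

theorem isBounded_directedSet (p : Fin m → ℝ) (A₁ : Matrix (Fin m) (Fin n) ℝ)
    (A₂ : Matrix (Fin m) (Fin k) ℝ) {X : Set (Fin n → ℝ)} {Y : Set (Fin k → ℝ)}
    (hX : Bornology.IsBounded X) (hY : Bornology.IsBounded Y) :
    Bornology.IsBounded (directedSet p A₁ A₂ X Y) := by
  have hcont : Continuous fun w : (Fin n → ℝ) × (Fin k → ℝ) => p + A₁ *ᵥ w.1 + A₂ *ᵥ w.2 := by
    fun_prop
  refine ((hX.isCompact_closure.prod hY.isCompact_closure).image hcont).isBounded.subset ?_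
  rintro _ ⟨x, hx, y, hy, rfl⟩
  exact ⟨(x, y), ⟨subset_closure hx, subset_closure hy⟩, rfl⟩

theorem isBounded_image_jacobian_apply {F : (Fin m → ℝ) → (Fin k → ℝ)} (hF : ContDiff ℝ 1 F)
    {S : Set (Fin m → ℝ)} (hS : Bornology.IsBounded S) (i : Fin k) (j : Fin m) :
    Bornology.IsBounded ((fun z => jacobian F z i j) '' S) := by
  have hcont : Continuous fun z => jacobian F z i j :=
    (continuous_apply i).comp ((hF.continuous_fderiv one_ne_zero).clm_apply continuous_const)
  exact (hS.isCompact_closure.image hcont).isBounded.subset (image_mono subset_closure)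

theorem jacobian_mem_jacobianHull {F : (Fin m → ℝ) → (Fin k → ℝ)} {S : Set (Fin m → ℝ)}
    (hS : ∀ i j, Bornology.IsBounded ((fun z => jacobian F z i j) '' S)) {z : Fin m → ℝ}
    (hz : z ∈ S) : jacobian F z ∈ jacobianHull F S := fun i j =>
  ⟨csInf_le (hS i j).bddBelow (mem_image_of_mem _ hz),
    le_csSup (hS i j).bddAbove (mem_image_of_mem _ hz)⟩

theorem directed_newton_derivative_bound_general {F : (Fin m → ℝ) → (Fin k → ℝ)} {p : Fin m → ℝ}
    {A₁ : Matrix (Fin m) (Fin n) ℝ} {A₂ : Matrix (Fin m) (Fin k) ℝ}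
    {X : Set (Fin n → ℝ)} {Y : Set (Fin k → ℝ)} {q : (Fin n → ℝ) → (Fin k → ℝ)}
    (hF : ∀ z ∈ directedSet p A₁ A₂ X Y, DifferentiableAt ℝ F z)
    (hbdd : ∀ i j, Bornology.IsBounded ((fun z => jacobian F z i j) '' directedSet p A₁ A₂ X Y))
    (hinv : ∀ M ∈ jacobianHull F (directedSet p A₁ A₂ X Y), IsUnit (M * A₂))
    (hqd : ∀ x ∈ interior X, DifferentiableAt ℝ q x)
    (hq : ∀ x ∈ X, q x ∈ Y ∧ F (p + A₁ *ᵥ x + A₂ *ᵥ q x) = 0) :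
    ∀ x ∈ interior X,
      jacobian F (p + A₁ *ᵥ x + A₂ *ᵥ q x) * (A₁ + A₂ * jacobian q x) = 0 ∧
      jacobian q x =
        -((jacobian F (p + A₁ *ᵥ x + A₂ *ᵥ q x) * A₂)⁻¹ *
          (jacobian F (p + A₁ *ᵥ x + A₂ *ᵥ q x) * A₁)) := by
  intro x hx
  have hxX : x ∈ X := interior_subset hx
  have hpS : p + A₁ *ᵥ x + A₂ *ᵥ q x ∈ directedSet p A₁ A₂ X Y :=
    ⟨x, hxX, q x, (hq x hxX).1, rfl⟩
  have hzero : ∀ᶠ w in nhds x, F (p + A₁ *ᵥ w + A₂ *ᵥ q w) = 0 :=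
    Filter.mem_of_superset (mem_interior_iff_mem_nhds.mp hx) fun w hw => (hq w hw).2
  have hjac := jacobian_mul_add_mul_jacobian_eq_zero (hF _ hpS) (hqd x hx) hzero
  exact ⟨hjac, eq_neg_inv_mul_of_mul_add_mul_eq_zero
    (hinv _ (jacobian_mem_jacobianHull hbdd hpS)) hjac⟩

end IntervalHull

/-- Derivative of the implicit curve from the directed interval Newton theorem
(Corollary 4.10 of the paper).  Under the assumptions of the directed Newton theorem, the
implicitly defined `q` satisfies `DF(p_x)(A₁ + A₂ Dq(x)) = 0` and
`Dq(x) = -(DF(p_x) A₂)⁻¹ DF(p_x) A₁` on the interior of `X`. -/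
theorem directed_newton_derivative_bound
    {m k : ℕ} (hmk : k < m)
    (F : (Fin m → ℝ) → (Fin k → ℝ)) (hF : ContDiff ℝ 1 F)
    (pstar : Fin m → ℝ)
    (A1 : Matrix (Fin m) (Fin (m - k)) ℝ) (A2 : Matrix (Fin m) (Fin k) ℝ)
    (a b : Fin (m - k) → ℝ) (c d : Fin k → ℝ)
    (X : Set (Fin (m - k) → ℝ)) (hX : X = univ.pi fun i => Icc (a i) (b i))
    (Y : Set (Fin k → ℝ)) (hY : Y = univ.pi fun i => Icc (c i) (d i))
    (SXY : Set (Fin m → ℝ))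
    (hSXY : SXY = {z | ∃ x ∈ X, ∃ y ∈ Y, z = pstar + A1 *ᵥ x + A2 *ᵥ y})
    (hullXY : Set (Matrix (Fin k) (Fin m) ℝ))
    (hhullXY : hullXY = {M | ∀ i j, M i j ∈ Icc
      (sInf ((fun z => fderiv ℝ F z (Pi.single j 1) i) '' SXY))
      (sSup ((fun z => fderiv ℝ F z (Pi.single j 1) i) '' SXY))})
    (hinv : ∀ M ∈ hullXY, IsUnit (M * A2))
    (q : (Fin (m - k) → ℝ) → (Fin k → ℝ))
    (hq1 : ContDiffOn ℝ 1 q X)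
    (hqd : ∀ x ∈ interior X, DifferentiableAt ℝ q x)
    (hq : ∀ x ∈ X, q x ∈ Y ∧ F (pstar + A1 *ᵥ x + A2 *ᵥ q x) = 0) :
    ∀ x ∈ interior X,
      jacobian F (pstar + A1 *ᵥ x + A2 *ᵥ q x) * (A1 + A2 * jacobian q x) = 0 ∧
      jacobian q x =
        -((jacobian F (pstar + A1 *ᵥ x + A2 *ᵥ q x) * A2)⁻¹ *
          (jacobian F (pstar + A1 *ᵥ x + A2 *ᵥ q x) * A1)) := by
  subst hX hY hSXY hhullXY
  have hS := isBounded_directedSet pstar A1 A2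
    (Bornology.IsBounded.pi fun i => Metric.isBounded_Icc (a i) (b i))
    (Bornology.IsBounded.pi fun i => Metric.isBounded_Icc (c i) (d i))
  exact directed_newton_derivative_bound_general
    (fun z _ => hF.differentiable one_ne_zero z) (isBounded_image_jacobian_apply hF hS) hinv hqd hq
end

section
/- (Existence of heteroclinic arcs for the Lomelí map.) Let f be the Lomelí map with parameters a = 44/100, b = 21/100, c = 35/100, α = −1/4, τ = −3/10 (which is a bijection of ℝ³). Then there exist two distinct fixed points p_1 ≠ p_2 of f and an injective continuous curve γ : [0,1] → ℝ³ such that γ(1) = f³(γ(0)) and every point q on the curve is heteroclinic from p_1 to p_2: lim_{n→∞} f^n(γ(s)) = p_2 and lim_{n→∞} f^{−n}(γ(s)) = p_1 for all s ∈ [0,1]. In particular the unstable manifold W^u(p_1) and the stable manifold W^s(p_2) intersect along a one-dimensional curve. -/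
open Filter

/-!
Near a saddle, an orbit that stays in a tube around the stable manifold for all time converges to
the saddle. A segment crossing the tube meets such an orbit: the parameters that escape through
either side form disjoint nonempty open sets, which do not exhaust the segment. Near a saddle the
map also keeps the gap between two strictly ordered points from closing, so two attracted points
are never strictly ordered. The inverse is conjugate to a map of the same form, so the same
applies to the past. In a thin tube of boxes around the numerical curve, whose forward and
backward images cross the two stable tubes in the ordered direction, the heteroclinic points are
therefore a compact graph over the first coordinate; interval arithmetic checks the crossings. The
arc runs along this graph from a heteroclinic point to its third iterate.
-/

namespace Lomeli

open Topology Set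

/-- Triples `(x₀, x₁, x₂)` of consecutive terms of an orbit, the oldest one first. -/
abbrev Vec (R : Type*) := R × R × R

/-- Coefficients of the quadratic recurrence
`x₃ = x₀ + α + τ₁ x₂ + τ₂ x₁ + a x₂² + b x₂ x₁ + c x₁²`, over the reals or over the balls that
enclose them. The Lomelí map and its inverse both obey such a recurrence. -/
structure Coeffs (R : Type*) where
  a : R
  b : R
  c : R
  τ₁ : R
  τ₂ : R
  α : R

namespace Coeffs

section Arithmetic

variable {R : Type*} [Add R] [Mul R]

/-- The quadratic part of the recurrence. -/
def quad (C : Coeffs R) (x y : R) : R :=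
  C.α + x * (C.τ₁ + C.a * x + C.b * y) + y * (C.τ₂ + C.c * y)

/-- The partial derivative of `quad` in its first argument. -/
def dx (C : Coeffs R) (x y : R) : R := C.τ₁ + (C.a + C.a) * x + C.b * y

/-- The partial derivative of `quad` in its second argument. -/
def dy (C : Coeffs R) (x y : R) : R := C.τ₂ + C.b * x + (C.c + C.c) * y

/-- One step of the recurrence, as a map of the phase space. -/
def shift (C : Coeffs R) (v : Vec R) : Vec R := (v.2.1, v.2.2, v.1 + C.quad v.2.2 v.2.1)

end Arithmetic

/-- The coefficients of the recurrence obeyed by the negated orbits run backwards in time. -/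
def reverse {R : Type*} [Neg R] (C : Coeffs R) : Coeffs R where
  a := C.c
  b := C.b
  c := C.a
  τ₁ := -C.τ₂
  τ₂ := -C.τ₁
  α := C.α

end Coeffs

/-- The time reversal of the phase space, which conjugates the inverse of a recurrence to its
`Coeffs.reverse`. -/
def flip {R : Type*} [Neg R] (v : Vec R) : Vec R := (-v.2.2, -v.2.1, -v.1)

theorem flip_flip (v : Vec ℝ) : flip (flip v) = v := by
  simp only [flip, neg_neg]

theorem continuous_flip : Continuous (flip : Vec ℝ → Vec ℝ) := by
  unfold flip
  fun_prop

namespace Coeffs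

variable (C : Coeffs ℝ)

theorem reverse_shift_flip_shift (v : Vec ℝ) : C.reverse.shift (flip (C.shift v)) = flip v := by
  simp only [shift, flip, quad, reverse, Prod.mk.injEq, true_and]
  ring

theorem reverse_shift_iterate_flip (v : Vec ℝ) (n : ℕ) :
    C.reverse.shift^[n] (flip (C.shift^[n] v)) = flip v := by
  induction n generalizing v with
  | zero => rfl
  | succ n ih =>
    rw [Function.iterate_succ_apply', Function.iterate_succ_apply, ih, reverse_shift_flip_shift]

theorem continuous_shift : Continuous C.shift := by
  unfold shift quad
  fun_prop

/-- The scalar orbit generated by the triple `v`. -/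
def orbit (v : Vec ℝ) (n : ℕ) : ℝ := (C.shift^[n] v).1

theorem orbit_shift_iterate (v : Vec ℝ) (m n : ℕ) :
    C.orbit (C.shift^[m] v) n = C.orbit v (n + m) := by
  rw [orbit, orbit, Function.iterate_add_apply]

theorem shift_iterate_eq (v : Vec ℝ) (n : ℕ) :
    C.shift^[n] v = (C.orbit v n, C.orbit v (n + 1), C.orbit v (n + 2)) := by
  simp only [orbit, Function.iterate_succ_apply', shift]

theorem orbit_add_three (v : Vec ℝ) (n : ℕ) :
    C.orbit v (n + 3) = C.orbit v n + C.quad (C.orbit v (n + 2)) (C.orbit v (n + 1)) := by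
  rw [orbit, add_comm n 3, Function.iterate_add_apply, C.shift_iterate_eq v n]
  rfl

/-- The quadratic part has no cubic remainder, so its secants are its tangents at midpoints. -/
theorem quad_sub_quad (x y x' y' : ℝ) :
    C.quad x' y' - C.quad x y =
      C.dx ((x + x') / 2) ((y + y') / 2) * (x' - x) +
        C.dy ((x + x') / 2) ((y + y') / 2) * (y' - y) := by
  simp only [quad, dx, dy]
  ring

end Coeffs

section Form

/-- The quadratic form `x² + pxy + qy²`. -/
def form {R : Type*} [Add R] [Mul R] (p q x y : R) : R := x * (x + p * y) + q * (y * y)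

variable {p q : ℝ}

theorem form_nonneg (h : p ^ 2 ≤ 4 * q) (x y : ℝ) : 0 ≤ form p q x y := by
  have : form p q x y = (x + p / 2 * y) ^ 2 + (4 * q - p ^ 2) / 4 * y ^ 2 := by
    unfold form
    ring
  rw [this]
  have := sub_nonneg.2 h
  positivity

theorem sqrt_form_add_le (h : p ^ 2 ≤ 4 * q) (x y w : ℝ) :
    √(form p q (x + w) y) ≤ √(form p q x y) + |w| := by
  have hV := form_nonneg h x y
  have cauchy : |x + p / 2 * y| ≤ √(form p q x y) := by
    refine Real.abs_le_sqrt ?_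
    unfold form
    nlinarith [mul_nonneg (sub_nonneg.2 h) (sq_nonneg y)]
  refine Real.sqrt_le_iff.2 ⟨by positivity, ?_⟩
  calc form p q (x + w) y = form p q x y + 2 * ((x + p / 2 * y) * w) + w ^ 2 := by
        unfold form
        ring
    _ ≤ form p q x y + 2 * (√(form p q x y) * |w|) + w ^ 2 := by
        have := (le_abs_self _).trans_eq (abs_mul (x + p / 2 * y) w)
        have := mul_le_mul_of_nonneg_right cauchy (abs_nonneg w)
        linarith
    _ = (√(form p q x y) + |w|) ^ 2 := by
        rw [add_sq, Real.sq_sqrt hV, sq_abs]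
        ring

theorem abs_le_two_mul_sqrt_form (h : p ^ 2 + 1 ≤ 4 * q) (x y : ℝ) :
    |y| ≤ 2 * √(form p q x y) := by
  refine abs_le_of_sq_le_sq ?_ (by positivity)
  rw [mul_pow, Real.sq_sqrt (form_nonneg (by linarith) x y), form]
  nlinarith [sq_nonneg (2 * x + p * y), mul_nonneg (sub_nonneg.2 h) (sq_nonneg y)]

theorem form_le_mul_form {A B D k : ℝ} (hA : A < k)
    (h : (k * p - B) ^ 2 ≤ 4 * (k - A) * (k * q - D)) (x y : ℝ) :
    A * x ^ 2 + B * (x * y) + D * y ^ 2 ≤ k * form p q x y := by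
  have := sub_pos.2 hA
  have : (k - A) * (k * form p q x y - (A * x ^ 2 + B * (x * y) + D * y ^ 2)) =
      ((k - A) * x + (k * p - B) / 2 * y) ^ 2 +
        (4 * (k - A) * (k * q - D) - (k * p - B) ^ 2) / 4 * y ^ 2 := by
    unfold form
    ring
  have : 0 ≤ (k - A) * (k * form p q x y - (A * x ^ 2 + B * (x * y) + D * y ^ 2)) := by
    rw [this]
    have := sub_nonneg.2 h
    positivity
  exact sub_nonneg.1 (nonneg_of_mul_nonneg_right this ‹_›)

end Form

/-- A candidate trapping region for the stable set of the fixed triple `(fp, fp, fp)`: the unstable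
left eigenvector is `(q, p, 1)` and should pair with the displacement `v - (fp, fp, fp)` to a value
in `[-κ, 0]`, the form `form p q` of the displacement should be at most `r`, and the entries
of `v` at least `floor`. The parameters are reals or balls that enclose them. -/
structure Region (R : Type*) where
  fp : R
  p : R
  q : R
  r : R
  κ : R
  floor : R

namespace Region

variable {R : Type*} [Add R] [Mul R] [Sub R]

/-- The displacement of a triple from the fixed point. -/
def displacement (T : Region R) (v : Vec R) : Vec R := (v.1 - T.fp, v.2.1 - T.fp, v.2.2 - T.fp)

/-- The unstable left eigenvector, as a linear functional. -/
def height (T : Region R) (v : Vec R) : R := v.2.2 + T.p * v.2.1 + T.q * v.1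

/-- The quadratic form that the two stable directions contract. -/
def gauge (T : Region R) (v : Vec R) : R := form T.p T.q v.2.2 v.2.1

end Region

/-- A fixed point `(fp, fp, fp)` of the recurrence with one unstable multiplier `mu`, together with
bounds `κ` and `R` on a neighbourhood in which its local stable set can be controlled. The
inequalities say that the quadratic part is nonnegative and at most `k` times the gauge, that an
orbit in the neighbourhood leaves it for good once its height leaves `[-κ, 0]`, that the gauge stays
bounded until then, and that the recurrence is order preserving above `fp - 2 * R`. -/
structure Saddle (C : Coeffs ℝ) where
  fp : ℝ
  mu : ℝ
  k : ℝ
  R : ℝ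
  κ : ℝ
  fixed : C.quad fp fp = 0
  one_lt_mu : 1 < mu
  characteristic : mu ^ 3 = C.dx fp fp * mu ^ 2 + C.dy fp fp * mu + 1
  R_pos : 0 < R
  escape : k * R ^ 2 < (mu - 1) * κ
  contract : √mu⁻¹ * R + κ ≤ R
  elliptic : (mu - C.dx fp fp) ^ 2 + 1 ≤ 4 * mu⁻¹
  a_lt : C.a < k
  dominated : (k * (mu - C.dx fp fp) - C.b) ^ 2 ≤ 4 * (k - C.a) * (k * mu⁻¹ - C.c)
  a_pos : 0 < C.a
  b_nonneg : 0 ≤ C.b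
  c_nonneg : 0 ≤ C.c
  semidefinite : C.b ^ 2 ≤ 4 * C.a * C.c
  dx_nonneg : 0 ≤ C.dx (fp - 2 * R) (fp - 2 * R)
  dy_nonneg : 0 ≤ C.dy (fp - 2 * R) (fp - 2 * R)

/-- If `m * w` is controlled by the increments of a bounded `w` and by `E`, and `E` contracts up to
`w`, then `E` decays provided the coupling `l` is small. -/
theorem tendsto_zero_of_coupled {E w : ℕ → ℝ} {κ l m s : ℝ} (hE : ∀ n, 0 ≤ E n)
    (hw : ∀ n, w n ≤ κ) (hl : l < m * (1 - s)) (hs : 0 ≤ s) (hm : 0 ≤ m)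
    (expand : ∀ n, m * w n ≤ w (n + 1) - w n + l * E n)
    (contract : ∀ n, E (n + 1) ≤ s * E n + w (n + 1)) : Tendsto E atTop (𝓝 0) := by
  set Ψ : ℕ → ℝ := fun n => w (n + 1) - (m - l) * E n with hΨ
  have increment (n : ℕ) : (m * (1 - s) - l) * E n ≤ Ψ (n + 1) - Ψ n := by
    have := mul_le_mul_of_nonneg_left (contract n) hm
    have := expand (n + 1)
    simp only [hΨ]
    linarith
  have hmono : Monotone Ψ := monotone_nat_of_le_succ fun n => sub_nonneg.1 <|
    (mul_nonneg (sub_nonneg.2 hl.le) (hE n)).trans (increment n)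
  have hbdd : BddAbove (range Ψ) := ⟨κ, by
    rintro _ ⟨n, rfl⟩
    have hlm : 0 ≤ m - l := by linarith [mul_nonneg hm hs]
    have := mul_nonneg hlm (hE n)
    simp only [hΨ]
    linarith [hw (n + 1)]⟩
  have hlim := tendsto_atTop_ciSup hmono hbdd
  have hdiff : Tendsto (fun n => (Ψ (n + 1) - Ψ n) / (m * (1 - s) - l)) atTop (𝓝 0) := by
    simpa using (((tendsto_add_atTop_iff_nat 1).2 hlim).sub hlim).div_const (m * (1 - s) - l)
  refine squeeze_zero hE (fun n => ?_) hdiff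
  rw [le_div_iff₀' (sub_pos.2 hl)]
  exact increment n

namespace Saddle

variable {C : Coeffs ℝ} (S : Saddle C)

/-- The trapping region of the saddle. -/
noncomputable def region : Region ℝ where
  fp := S.fp
  p := S.mu - C.dx S.fp S.fp
  q := S.mu⁻¹
  r := S.R ^ 2
  κ := S.κ
  floor := S.fp - 2 * S.R

/-- The height of a triple over the fixed point. -/
noncomputable def height (v : Vec ℝ) : ℝ := S.region.height (S.region.displacement v)

/-- The size of the stable component of a triple relative to the fixed point. -/
noncomputable def radius (v : Vec ℝ) : ℝ := √(S.region.gauge (S.region.displacement v))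

/-- The quadratic remainder of the recurrence at the fixed point. -/
def remainder (v : Vec ℝ) : ℝ :=
  C.a * (v.2.2 - S.fp) ^ 2 + C.b * ((v.2.2 - S.fp) * (v.2.1 - S.fp)) + C.c * (v.2.1 - S.fp) ^ 2

variable {S} {v w : Vec ℝ}

theorem discriminant_nonpos : (S.mu - C.dx S.fp S.fp) ^ 2 ≤ 4 * S.mu⁻¹ :=
  (le_add_of_nonneg_right zero_le_one).trans S.elliptic

theorem radius_nonneg : 0 ≤ S.radius v := Real.sqrt_nonneg _

theorem radius_sq : S.radius v ^ 2 = S.region.gauge (S.region.displacement v) :=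
  Real.sq_sqrt (form_nonneg discriminant_nonpos _ _)

theorem radius_lt (h : S.region.gauge (S.region.displacement v) < S.region.r) :
    S.radius v < S.R :=
  (Real.sqrt_lt' S.R_pos).2 h

theorem continuous_height : Continuous S.height := by
  unfold height Region.height Region.displacement
  fun_prop

theorem height_shift : S.height (C.shift v) = S.mu * S.height v + S.remainder v := by
  have hmu : S.mu * S.mu⁻¹ = 1 := mul_inv_cancel₀ (zero_lt_one.trans S.one_lt_mu).ne'
  have hp : S.mu * (S.mu - C.dx S.fp S.fp) = C.dy S.fp S.fp + S.mu⁻¹ := by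
    linear_combination S.mu⁻¹ * S.characteristic -
      (S.mu ^ 2 - C.dx S.fp S.fp * S.mu - C.dy S.fp S.fp) * hmu
  have hquad : C.quad v.2.2 v.2.1 = C.dx S.fp S.fp * (v.2.2 - S.fp) +
      C.dy S.fp S.fp * (v.2.1 - S.fp) + S.remainder v := by
    rw [← sub_zero (C.quad _ _), ← S.fixed]
    simp only [remainder, Coeffs.quad, Coeffs.dx, Coeffs.dy]
    ring
  simp only [height, Region.height, Region.displacement, region, Coeffs.shift, hquad]
  linear_combination -(v.2.1 - S.fp) * hp - (v.1 - S.fp) * hmu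

theorem remainder_nonneg : 0 ≤ S.remainder v := by
  set x := v.2.2 - S.fp
  set y := v.2.1 - S.fp
  have square : 4 * C.a * S.remainder v =
      (2 * C.a * x + C.b * y) ^ 2 + (4 * C.a * C.c - C.b ^ 2) * y ^ 2 := by
    simp only [remainder]
    ring
  have hdisc := sub_nonneg.2 S.semidefinite
  have ha := S.a_pos
  refine nonneg_of_mul_nonneg_right (a := 4 * C.a) ?_ (by positivity)
  rw [square]
  positivity

theorem remainder_le : S.remainder v ≤ S.k * S.radius v ^ 2 := by
  rw [radius_sq]
  exact form_le_mul_form S.a_lt S.dominated _ _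

theorem k_pos : 0 < S.k := S.a_pos.trans S.a_lt

theorem mu_sub_one_pos : 0 < S.mu - 1 := sub_pos.2 S.one_lt_mu

theorem κ_pos : 0 < S.κ :=
  pos_of_mul_pos_right ((mul_nonneg k_pos.le (sq_nonneg S.R)).trans_lt S.escape)
    mu_sub_one_pos.le

theorem radius_shift_le :
    S.radius (C.shift v) ≤ √S.mu⁻¹ * S.radius v + |S.height (C.shift v)| := by
  set x := v.2.2 - S.fp
  set y := v.2.1 - S.fp
  set p := S.mu - C.dx S.fp S.fp
  have kernel : form p S.mu⁻¹ (-(p * x) - S.mu⁻¹ * y) x = S.mu⁻¹ * form p S.mu⁻¹ x y := by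
    simp only [form]
    ring
  have hnewest : (C.shift v).2.2 - S.fp =
      -(p * x) - S.mu⁻¹ * y + S.height (C.shift v) := by
    simp only [height, Region.height, Region.displacement, region, Coeffs.shift, p, x, y]
    ring
  calc S.radius (C.shift v) = √(form p S.mu⁻¹ ((C.shift v).2.2 - S.fp) x) := rfl
    _ ≤ √(form p S.mu⁻¹ (-(p * x) - S.mu⁻¹ * y) x) + |S.height (C.shift v)| := by
        rw [hnewest]
        exact sqrt_form_add_le discriminant_nonpos _ _ _
    _ = √S.mu⁻¹ * S.radius v + |S.height (C.shift v)| := by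
        rw [kernel, Real.sqrt_mul (inv_nonneg.2 (zero_lt_one.trans S.one_lt_mu).le)]
        rfl

theorem radius_shift_le_R (hv : S.radius v ≤ S.R) (h : |S.height (C.shift v)| ≤ S.κ) :
    S.radius (C.shift v) ≤ S.R := by
  have := mul_le_mul_of_nonneg_left hv (Real.sqrt_nonneg S.mu⁻¹)
  linarith [radius_shift_le (S := S) (v := v), S.contract]

variable (S) in
/-- The triple stays in the trapping region for all positive times. -/
def Trapped (v : Vec ℝ) : Prop :=
  ∀ n, S.radius (C.shift^[n] v) ≤ S.R ∧ S.height (C.shift^[n] v) ∈ Icc (-S.κ) 0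

theorem Trapped.tendsto_radius (h : S.Trapped v) :
    Tendsto (fun n => S.radius (C.shift^[n] v)) atTop (𝓝 0) := by
  have hm := S.mu_sub_one_pos
  refine tendsto_zero_of_coupled (w := fun n => -S.height (C.shift^[n] v)) (κ := S.κ)
    (l := S.k * S.R) (m := S.mu - 1) (s := √S.mu⁻¹) (fun _ => radius_nonneg)
    (fun n => neg_le.1 (h n).2.1) ?_ (Real.sqrt_nonneg _) hm.le (fun n => ?_) (fun n => ?_)
  · refine lt_of_mul_lt_mul_right ?_ S.R_pos.le
    have := mul_le_mul_of_nonneg_left S.contract hm.le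
    linarith [S.escape]
  · have hrem : S.remainder (C.shift^[n] v) ≤ S.k * S.R * S.radius (C.shift^[n] v) := by
      refine remainder_le.trans ?_
      rw [sq, ← mul_assoc]
      gcongr
      · exact radius_nonneg
      · exact k_pos.le
      · exact (h n).1
    simp only [Function.iterate_succ_apply', height_shift]
    linarith
  · have := (h (n + 1)).2.2
    rw [Function.iterate_succ_apply'] at this ⊢
    refine radius_shift_le.trans_eq ?_
    rw [abs_of_nonpos this]

variable (S) in
/-- The orbit of the triple converges to the fixed point through the order preserving region. -/
def Attracted (v : Vec ℝ) : Prop :=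
  Tendsto (C.orbit v) atTop (𝓝 S.fp) ∧ ∀ n, S.region.floor ≤ C.orbit v n

theorem abs_orbit_succ_sub_le (n : ℕ) :
    |C.orbit v (n + 1) - S.fp| ≤ 2 * S.radius (C.shift^[n] v) := by
  have := abs_le_two_mul_sqrt_form S.elliptic ((C.shift^[n] v).2.2 - S.fp)
    ((C.shift^[n] v).2.1 - S.fp)
  rwa [C.shift_iterate_eq v n] at this ⊢

theorem Trapped.attracted (h : S.Trapped v) (hv : S.region.floor ≤ v.1) : S.Attracted v := by
  constructor
  · rw [← tendsto_add_atTop_iff_nat 1, tendsto_iff_dist_tendsto_zero]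
    refine squeeze_zero (fun _ => dist_nonneg) (fun n => abs_orbit_succ_sub_le n) ?_
    simpa using h.tendsto_radius.const_mul 2
  · rintro (_ | n)
    · exact hv
    · have := (abs_le.1 (abs_orbit_succ_sub_le (S := S) (v := v) n)).1
      simp only [region]
      linarith [(h n).1]

theorem dx_nonneg_of_floor_le {x y : ℝ} (hx : S.region.floor ≤ x) (hy : S.region.floor ≤ y) :
    0 ≤ C.dx x y := by
  refine S.dx_nonneg.trans ?_
  have := S.a_pos
  have := S.b_nonneg
  simp only [region] at hx hy
  unfold Coeffs.dx
  gcongr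

theorem dy_nonneg_of_floor_le {x y : ℝ} (hx : S.region.floor ≤ x) (hy : S.region.floor ≤ y) :
    0 ≤ C.dy x y := by
  refine S.dy_nonneg.trans ?_
  have := S.c_nonneg
  have := S.b_nonneg
  simp only [region] at hx hy
  unfold Coeffs.dy
  gcongr

/-- The recurrence is order preserving above the floor, so gaps between ordered orbits persist. -/
theorem le_orbit_sub_orbit {δ : ℝ} (hδ : 0 ≤ δ) (hv : ∀ n, S.region.floor ≤ C.orbit v n)
    (hw : ∀ n, S.region.floor ≤ C.orbit w n) (h₀ : δ ≤ w.1 - v.1) (h₁ : δ ≤ w.2.1 - v.2.1)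
    (h₂ : δ ≤ w.2.2 - v.2.2) (n : ℕ) : δ ≤ C.orbit w n - C.orbit v n := by
  suffices ∀ n, δ ≤ C.orbit w n - C.orbit v n ∧ δ ≤ C.orbit w (n + 1) - C.orbit v (n + 1) ∧
      δ ≤ C.orbit w (n + 2) - C.orbit v (n + 2) from (this n).1
  intro n
  induction n with
  | zero => exact ⟨h₀, h₁, h₂⟩
  | succ n ih =>
    refine ⟨ih.2.1, ih.2.2, ?_⟩
    have mid (i : ℕ) : S.region.floor ≤ (C.orbit v i + C.orbit w i) / 2 := by
      linarith [hv i, hw i]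
    have hx := mul_nonneg (dx_nonneg_of_floor_le (mid (n + 2)) (mid (n + 1)))
      (hδ.trans ih.2.2)
    have hy := mul_nonneg (dy_nonneg_of_floor_le (mid (n + 2)) (mid (n + 1)))
      (hδ.trans ih.2.1)
    have := C.quad_sub_quad (C.orbit v (n + 2)) (C.orbit v (n + 1)) (C.orbit w (n + 2))
      (C.orbit w (n + 1))
    rw [add_assoc, C.orbit_add_three v n, C.orbit_add_three w n]
    linarith [ih.1]

theorem Attracted.not_lt (hv : S.Attracted v) (hw : S.Attracted w) :
    ¬ (v.1 < w.1 ∧ v.2.1 < w.2.1 ∧ v.2.2 < w.2.2) := by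
  rintro ⟨h₀, h₁, h₂⟩
  set δ := min (w.1 - v.1) (min (w.2.1 - v.2.1) (w.2.2 - v.2.2)) with hδ
  have hδ_pos : 0 < δ := by
    simp only [hδ, lt_min_iff, sub_pos]
    exact ⟨h₀, h₁, h₂⟩
  have hgap (n : ℕ) : δ ≤ C.orbit w n - C.orbit v n :=
    le_orbit_sub_orbit hδ_pos.le hv.2 hw.2 (min_le_left _ _)
      ((min_le_right _ _).trans (min_le_left _ _)) ((min_le_right _ _).trans (min_le_right _ _)) n
  have hlim : Tendsto (fun n => C.orbit w n - C.orbit v n) atTop (𝓝 0) := by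
    simpa using hw.1.sub hv.1
  exact hδ_pos.not_ge (ge_of_tendsto' hlim hgap)

theorem height_shift_pos (h : 0 < S.height v) : 0 < S.height (C.shift v) := by
  rw [height_shift]
  have := mul_pos (zero_lt_one.trans S.one_lt_mu) h
  linarith [remainder_nonneg (S := S) (v := v)]

theorem height_iterate_pos {m n : ℕ} (hmn : m ≤ n) (h : 0 < S.height (C.shift^[m] v)) :
    0 < S.height (C.shift^[n] v) := by
  induction n, hmn using Nat.le_induction with
  | base => exact h
  | succ n _ ih =>
    rw [Function.iterate_succ_apply']
    exact height_shift_pos ih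

theorem height_shift_lt (hv : S.radius v ≤ S.R) (h : S.height v ≤ -S.κ) :
    S.height (C.shift v) < -S.κ := by
  have hrem : S.remainder v ≤ S.k * S.R ^ 2 := by
    refine remainder_le.trans ?_
    gcongr
    · exact k_pos.le
    · exact radius_nonneg
  rw [height_shift]
  have := mul_le_mul_of_nonneg_left h (zero_lt_one.trans S.one_lt_mu).le
  linarith [S.escape]

theorem radius_iterate_le {n : ℕ} (hv : S.radius v ≤ S.R)
    (h : ∀ m ≤ n, S.height (C.shift^[m] v) ∈ Icc (-S.κ) 0) : S.radius (C.shift^[n] v) ≤ S.R := by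
  induction n with
  | zero => exact hv
  | succ n ih =>
    have hn := h (n + 1) le_rfl
    rw [Function.iterate_succ_apply'] at hn ⊢
    refine radius_shift_le_R (ih fun m hm => h m (by lia)) ?_
    exact abs_le.2 ⟨hn.1, hn.2.trans κ_pos.le⟩

theorem exits_of_not_trapped (hv : S.radius v ≤ S.R) (h : ¬S.Trapped v) :
    (∃ n, 0 < S.height (C.shift^[n] v) ∧ ∀ m ≤ n, -S.κ < S.height (C.shift^[m] v)) ∨
      ∃ n, S.height (C.shift^[n] v) < -S.κ := by
  classical
  have hexit : ∃ n, S.height (C.shift^[n] v) ∉ Icc (-S.κ) 0 := by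
    by_contra! hin
    exact h fun n => ⟨radius_iterate_le hv fun m _ => hin m, hin n⟩
  set n := Nat.find hexit
  have hbefore {m : ℕ} (hm : m < n) : S.height (C.shift^[m] v) ∈ Icc (-S.κ) 0 :=
    not_not.1 (Nat.find_min hexit hm)
  by_cases hlow : ∃ m ≤ n, S.height (C.shift^[m] v) ≤ -S.κ
  · obtain ⟨m, hmn, hm⟩ := hlow
    refine .inr ?_
    obtain hmn | rfl := hmn.lt_or_eq
    · refine ⟨m + 1, ?_⟩
      rw [Function.iterate_succ_apply']
      exact height_shift_lt (radius_iterate_le hv fun _ hl => hbefore (hl.trans_lt hmn)) hm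
    · exact ⟨n, lt_of_not_ge fun hge => Nat.find_spec hexit ⟨hge, hm.trans (neg_nonpos.2 κ_pos.le)⟩⟩
  · push Not at hlow
    exact .inl ⟨n, lt_of_not_ge fun hle => Nat.find_spec hexit ⟨(hlow n le_rfl).le, hle⟩, hlow⟩

/-- An orbit whose height turns positive never comes back, so the two ways of leaving the trapping
region are open conditions that exclude each other. -/
theorem exists_trapped_of_crossing {X : Type*} [TopologicalSpace X] [PreconnectedSpace X]
    {φ : X → Vec ℝ} (hφ : Continuous φ) (hR : ∀ x, S.radius (φ x) ≤ S.R)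
    (below : ∃ x, S.height (φ x) < -S.κ) (above : ∃ x, 0 < S.height (φ x)) :
    ∃ x, S.Trapped (φ x) := by
  have hH (n : ℕ) : Continuous fun x => S.height (C.shift^[n] (φ x)) :=
    continuous_height.comp ((C.continuous_shift.iterate n).comp hφ)
  let U : Set X := ⋃ n, {x | 0 < S.height (C.shift^[n] (φ x))} ∩
    ⋂ m ∈ Iic n, {x | -S.κ < S.height (C.shift^[m] (φ x))}
  let L : Set X := ⋃ n, {x | S.height (C.shift^[n] (φ x)) < -S.κ}
  have hU : IsOpen U := isOpen_iUnion fun n => (isOpen_lt continuous_const (hH n)).inter <|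
    (finite_Iic n).isOpen_biInter fun m _ => isOpen_lt continuous_const (hH m)
  have hL : IsOpen L := isOpen_iUnion fun n => isOpen_lt (hH n) continuous_const
  by_contra! hescape
  have hcover : univ ⊆ U ∪ L := fun x _ => by
    simpa [U, L] using exits_of_not_trapped (hR x) (hescape x)
  obtain ⟨a, ha⟩ := above
  obtain ⟨b, hb⟩ := below
  have haU : a ∈ U := mem_iUnion.2 ⟨0, ha, by simpa using (neg_neg_of_pos κ_pos).trans ha⟩
  obtain ⟨x, -, hxU, hxL⟩ := isPreconnected_univ U L hU hL hcover ⟨a, mem_univ a, haU⟩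
    ⟨b, mem_univ b, mem_iUnion.2 ⟨0, hb⟩⟩
  simp only [U, L, mem_iUnion, mem_inter_iff, mem_iInter, mem_ofPred_eq, mem_Iic] at hxU hxL
  obtain ⟨n, hpos, hn⟩ := hxU
  obtain ⟨m, hm⟩ := hxL
  obtain hmn | hnm := le_or_gt m n
  · exact (hn m hmn).not_gt hm
  · linarith [height_iterate_pos hnm.le hpos, κ_pos (S := S)]

end Saddle

section Ball

/-- A ball with centre `mid` and radius `rad`, both in units of `2⁻⁴⁰`. -/
structure Ball where
  mid : ℤ
  rad : ℕ

namespace Ball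

instance : Membership ℝ Ball := ⟨fun X x => |x * 1099511627776 - X.mid| ≤ X.rad⟩

instance : Add Ball := ⟨fun X Y => ⟨X.mid + Y.mid, X.rad + Y.rad⟩⟩

instance : Sub Ball := ⟨fun X Y => ⟨X.mid - Y.mid, X.rad + Y.rad⟩⟩

instance : Neg Ball := ⟨fun X => ⟨-X.mid, X.rad⟩⟩

instance : Mul Ball := ⟨fun X Y => ⟨X.mid * Y.mid / 1099511627776,
  (X.mid.natAbs * Y.rad + X.rad * (Y.mid.natAbs + Y.rad)) / 1099511627776 + 2⟩⟩

/-- A ball that contains all products of elements of `X` with elements of `[-1, 1]`. -/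
def sweep (X : Ball) : Ball := ⟨0, X.mid.natAbs + X.rad⟩

/-- The ball of radius zero around an integer multiple of `2⁻⁴⁰`. -/
def exact (z : ℤ) : Ball := ⟨z, 0⟩

/-- A ball that contains the fraction `m / d`. -/
def ofFrac (m : ℤ) (d : ℕ) : Ball := ⟨m * 1099511627776 / d, 1⟩

/-- The test that all elements of a ball are positive. -/
def pos (X : Ball) : Bool := decide ((X.rad : ℤ) < X.mid)

variable {X Y : Ball} {x y : ℝ}

theorem mem_def : x ∈ X ↔ |x * 1099511627776 - X.mid| ≤ X.rad := Iff.rfl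

theorem add_mem (hx : x ∈ X) (hy : y ∈ Y) : x + y ∈ X + Y := by
  rw [mem_def] at *
  change |_ - ((X.mid + Y.mid : ℤ) : ℝ)| ≤ ((X.rad + Y.rad : ℕ) : ℝ)
  push_cast
  rw [abs_le] at *
  constructor <;> linarith

theorem sub_mem (hx : x ∈ X) (hy : y ∈ Y) : x - y ∈ X - Y := by
  rw [mem_def] at *
  change |_ - ((X.mid - Y.mid : ℤ) : ℝ)| ≤ ((X.rad + Y.rad : ℕ) : ℝ)
  push_cast
  rw [abs_le] at *
  constructor <;> linarith

theorem neg_mem (hx : x ∈ X) : -x ∈ -X := by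
  rw [mem_def] at *
  change |_ - ((-X.mid : ℤ) : ℝ)| ≤ X.rad
  push_cast
  rw [abs_le] at *
  constructor <;> linarith

theorem abs_cast_ediv_sub_le (m : ℤ) (d : ℕ) : |(m : ℝ) / d - (m / d : ℤ)| ≤ 1 := by
  have hfloor : ⌊(m / d : ℝ)⌋ = m / d := by rw [Int.floor_div_natCast, Int.floor_intCast]
  rw [← hfloor, Int.self_sub_floor, Int.abs_fract]
  exact (Int.fract_lt_one _).le

theorem ofFrac_mem {m : ℤ} {d : ℕ} (hx : x = m / d) : x ∈ ofFrac m d := by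
  have := abs_cast_ediv_sub_le (m * 1099511627776) d
  rw [mem_def, hx]
  push_cast [ofFrac] at this ⊢
  rwa [div_mul_eq_mul_div]

theorem abs_le_of_mem (hx : x ∈ X) : |x * 1099511627776| ≤ X.mid.natAbs + X.rad := by
  rw [mem_def] at hx
  rw [Nat.cast_natAbs, Int.cast_abs]
  linarith [abs_sub_abs_le_abs_sub (x * 1099511627776) X.mid]

theorem mul_mem (hx : x ∈ X) (hy : y ∈ Y) : x * y ∈ X * Y := by
  have hmid := abs_cast_ediv_sub_le (X.mid * Y.mid) 1099511627776
  set num := X.mid.natAbs * Y.rad + X.rad * (Y.mid.natAbs + Y.rad) with hnum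
  have hrad : (num : ℝ) ≤ ((num / 1099511627776 : ℕ) + 1) * 1099511627776 := by
    exact_mod_cast (show num ≤ (num / 1099511627776 + 1) * 1099511627776 by lia)
  have herr : |(x * 1099511627776) * (y * 1099511627776) - X.mid * Y.mid| ≤ num := by
    calc _ = |X.mid * (y * 1099511627776 - Y.mid) +
            (x * 1099511627776 - X.mid) * (y * 1099511627776)| := by ring_nf
      _ ≤ |(X.mid : ℝ)| * Y.rad + X.rad * (Y.mid.natAbs + Y.rad) := by
          refine (abs_add_le _ _).trans ?_
          rw [abs_mul, abs_mul]
          gcongr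
          exacts [hy, hx, abs_le_of_mem hy]
      _ = num := by
          push_cast [hnum, Nat.cast_natAbs]
          ring
  change |_ - ((X.mid * Y.mid / 1099511627776 : ℤ) : ℝ)| ≤ ((num / 1099511627776 + 2 : ℕ) : ℝ)
  push_cast at hmid ⊢
  rw [abs_le] at *
  constructor <;> linarith

theorem exact_mem (z : ℤ) : (z / 1099511627776 : ℝ) ∈ exact z := by
  rw [mem_def]
  simp [exact]

theorem mul_mem_sweep {a : ℝ} (ha : |a| ≤ 1) (hx : x ∈ X) : a * x ∈ X.sweep := by
  rw [mem_def]
  push_cast [sweep]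
  rw [sub_zero, mul_assoc, abs_mul]
  exact (mul_le_of_le_one_left (abs_nonneg _) ha).trans (abs_le_of_mem hx)

theorem pos_of_mem (h : X.pos = true) (hx : x ∈ X) : 0 < x := by
  have h : (X.rad : ℝ) < X.mid := by exact_mod_cast of_decide_eq_true h
  rw [mem_def, abs_le] at hx
  linarith

/-- The test that `|y| < x` for all `x` in `X` and all `y` in `Y`. -/
def dominates (X Y : Ball) : Bool := (X - Y).pos && (X + Y).pos

theorem combination_pos (h : X.dominates Y = true) (hx : x ∈ X) (hy : y ∈ Y) {a b : ℝ}
    (hab : |a| ≤ b) (hb : 0 < b) : 0 < a * y + b * x := by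
  obtain ⟨hsub, hadd⟩ := Bool.and_eq_true_iff.1 h
  have hyx : |y| < x := abs_lt.2 ⟨by linarith [pos_of_mem hadd (add_mem hx hy)],
    sub_pos.1 (pos_of_mem hsub (sub_mem hx hy))⟩
  have : |a * y| < b * x := by
    rw [abs_mul]
    exact mul_lt_mul_of_le_of_lt_of_nonneg_of_pos hab hyx (abs_nonneg y) hb
  linarith [neg_abs_le (a * y)]

theorem midpoint_mem (hx : x ∈ X) (hy : y ∈ X) : (x + y) / 2 ∈ X := by
  rw [mem_def, abs_le] at *
  constructor <;> linarith

end Ball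

end Ball

section Enclosure

namespace Coeffs

instance : Membership (Coeffs ℝ) (Coeffs Ball) := ⟨fun D C =>
  C.a ∈ D.a ∧ C.b ∈ D.b ∧ C.c ∈ D.c ∧ C.τ₁ ∈ D.τ₁ ∧ C.τ₂ ∈ D.τ₂ ∧ C.α ∈ D.α⟩

variable {C : Coeffs ℝ} {D : Coeffs Ball} {X Y : Ball} {x y : ℝ}

open Ball

theorem quad_mem (hC : C ∈ D) (hx : x ∈ X) (hy : y ∈ Y) : C.quad x y ∈ D.quad X Y := by
  obtain ⟨ha, hb, hc, h₁, h₂, hα⟩ := hC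
  exact add_mem (add_mem hα (mul_mem hx (add_mem (add_mem h₁ (mul_mem ha hx)) (mul_mem hb hy))))
    (mul_mem hy (add_mem h₂ (mul_mem hc hy)))

theorem dx_mem (hC : C ∈ D) (hx : x ∈ X) (hy : y ∈ Y) : C.dx x y ∈ D.dx X Y := by
  obtain ⟨ha, hb, -, h₁, -, -⟩ := hC
  exact add_mem (add_mem h₁ (mul_mem (add_mem ha ha) hx)) (mul_mem hb hy)

theorem dy_mem (hC : C ∈ D) (hx : x ∈ X) (hy : y ∈ Y) : C.dy x y ∈ D.dy X Y := by
  obtain ⟨-, hb, hc, -, h₂, -⟩ := hC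
  exact add_mem (add_mem h₂ (mul_mem hb hx)) (mul_mem (add_mem hc hc) hy)

theorem reverse_mem (hC : C ∈ D) : C.reverse ∈ D.reverse := by
  obtain ⟨ha, hb, hc, h₁, h₂, hα⟩ := hC
  exact ⟨hc, hb, ha, neg_mem h₂, neg_mem h₁, hα⟩

end Coeffs

instance : Membership (Vec ℝ) (Vec Ball) := ⟨fun X v => v.1 ∈ X.1 ∧ v.2.1 ∈ X.2.1 ∧ v.2.2 ∈ X.2.2⟩

/-- The linear part of the recurrence with partial derivatives `A` and `B`. -/
def tangent {R : Type*} [Add R] [Mul R] (A B : R) (v : Vec R) : Vec R :=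
  (v.2.1, v.2.2, v.1 + (A * v.2.2 + B * v.2.1))

/-- Enclosures for the image of a box under an iterate of the recurrence: of the image `center` of
its centre and of the images `t`, `o`, `s` of its three edges under secants of the iterate. -/
structure Enclosure where
  center : Vec Ball
  t : Vec Ball
  o : Vec Ball
  s : Vec Ball

/-- The cube `[-1, 1]³` of parameters of a box. -/
def cube : Set (Vec ℝ) := Icc (-1) 1

theorem mem_cube {u : Vec ℝ} : u ∈ cube ↔ |u.1| ≤ 1 ∧ |u.2.1| ≤ 1 ∧ |u.2.2| ≤ 1 := by
  simp only [cube, mem_Icc, Prod.le_def, abs_le, Prod.fst_neg, Prod.snd_neg, Prod.fst_one,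
    Prod.snd_one]
  tauto

namespace Enclosure

/-- A triple of balls that contains the enclosed image of the box. -/
def hull (E : Enclosure) : Vec Ball where
  fst := E.center.1 + E.t.1.sweep + E.o.1.sweep + E.s.1.sweep
  snd := (E.center.2.1 + E.t.2.1.sweep + E.o.2.1.sweep + E.s.2.1.sweep,
    E.center.2.2 + E.t.2.2.sweep + E.o.2.2.sweep + E.s.2.2.sweep)

/-- The enclosure for one more iteration. -/
def step (D : Coeffs Ball) (E : Enclosure) : Enclosure :=
  let A := D.dx E.hull.2.2 E.hull.2.1
  let B := D.dy E.hull.2.2 E.hull.2.1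
  ⟨D.shift E.center, tangent A B E.t, tangent A B E.o, tangent A B E.s⟩

/-- The map `φ` on the cube obeys the enclosure. -/
structure Encloses (E : Enclosure) (φ : Vec ℝ → Vec ℝ) : Prop where
  center_mem : φ 0 ∈ E.center
  secant : ∀ u ∈ cube, ∀ u' ∈ cube, ∃ t ∈ E.t, ∃ o ∈ E.o, ∃ s ∈ E.s,
    φ u' - φ u = (u' - u).1 • t + (u' - u).2.1 • o + (u' - u).2.2 • s

variable {E : Enclosure} {φ : Vec ℝ → Vec ℝ}

open Ball

theorem Encloses.mem_hull (h : E.Encloses φ) {u : Vec ℝ} (hu : u ∈ cube) : φ u ∈ E.hull := by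
  obtain ⟨t, ht, o, ho, s, hs, heq⟩ := h.secant 0 (by simp [mem_cube]) u hu
  rw [sub_zero, sub_eq_iff_eq_add'] at heq
  obtain ⟨ht', ho', hs'⟩ := mem_cube.1 hu
  rw [heq, ← add_assoc, ← add_assoc]
  have hc := h.center_mem
  exact ⟨add_mem (add_mem (add_mem hc.1 (mul_mem_sweep ht' ht.1)) (mul_mem_sweep ho' ho.1))
      (mul_mem_sweep hs' hs.1),
    add_mem (add_mem (add_mem hc.2.1 (mul_mem_sweep ht' ht.2.1)) (mul_mem_sweep ho' ho.2.1))
      (mul_mem_sweep hs' hs.2.1),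
    add_mem (add_mem (add_mem hc.2.2 (mul_mem_sweep ht' ht.2.2)) (mul_mem_sweep ho' ho.2.2))
      (mul_mem_sweep hs' hs.2.2)⟩

theorem tangent_mem {A B : ℝ} {A' B' : Ball} {v : Vec ℝ} {X : Vec Ball} (hA : A ∈ A') (hB : B ∈ B')
    (hv : v ∈ X) : tangent A B v ∈ tangent A' B' X :=
  ⟨hv.2.1, hv.2.2, add_mem hv.1 (add_mem (mul_mem hA hv.2.2) (mul_mem hB hv.2.1))⟩

variable {C : Coeffs ℝ} {D : Coeffs Ball}

theorem Encloses.shift (h : E.Encloses φ) (hC : C ∈ D) : (E.step D).Encloses (C.shift ∘ φ) := by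
  refine ⟨⟨h.center_mem.2.1, h.center_mem.2.2, add_mem h.center_mem.1
    (C.quad_mem hC h.center_mem.2.2 h.center_mem.2.1)⟩, fun u hu u' hu' => ?_⟩
  obtain ⟨t, ht, o, ho, s, hs, heq⟩ := h.secant u hu u' hu'
  obtain ⟨-, hy, hx⟩ := h.mem_hull hu
  obtain ⟨-, hy', hx'⟩ := h.mem_hull hu'
  set A := C.dx (((φ u).2.2 + (φ u').2.2) / 2) (((φ u).2.1 + (φ u').2.1) / 2)
  set B := C.dy (((φ u).2.2 + (φ u').2.2) / 2) (((φ u).2.1 + (φ u').2.1) / 2)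
  have hA : A ∈ D.dx E.hull.2.2 E.hull.2.1 :=
    C.dx_mem hC (midpoint_mem hx hx') (midpoint_mem hy hy')
  have hB : B ∈ D.dy E.hull.2.2 E.hull.2.1 :=
    C.dy_mem hC (midpoint_mem hx hx') (midpoint_mem hy hy')
  refine ⟨_, tangent_mem hA hB ht, _, tangent_mem hA hB ho, _, tangent_mem hA hB hs, ?_⟩
  calc C.shift (φ u') - C.shift (φ u) = tangent A B (φ u' - φ u) := by
        simp only [Coeffs.shift, tangent, Prod.ext_iff, Prod.fst_sub, Prod.snd_sub,
          add_sub_add_comm, C.quad_sub_quad (φ u).2.2 (φ u).2.1, A, B, and_self]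
    _ = _ := by
        rw [heq]
        ext <;> simp only [tangent, Prod.fst_add, Prod.snd_add, Prod.smul_fst, Prod.smul_snd,
          smul_eq_mul]
        ring

end Enclosure

/-- Evaluates `n` before passing it on to `k`. Iterating the ball arithmetic in this style, the
kernel computes with literals instead of ever larger unevaluated terms. -/
def forceNat {β : Type*} (n : ℕ) (k : ℕ → β) : β :=
  match n with
  | 0 => k 0
  | n + 1 => k (n + 1)

theorem forceNat_eq {β : Type*} (n : ℕ) (k : ℕ → β) : forceNat n k = k n := by
  cases n <;> rfl

/-- The analogue of `forceNat` for balls. -/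
def Ball.force {β : Type*} (X : Ball) (k : Ball → β) : β :=
  forceNat X.rad fun r => match X.mid with
    | .ofNat n => forceNat n fun n => k ⟨.ofNat n, r⟩
    | .negSucc n => forceNat n fun n => k ⟨.negSucc n, r⟩

theorem Ball.force_eq {β : Type*} (X : Ball) (k : Ball → β) : X.force k = k X := by
  obtain ⟨_ | _, _⟩ := X <;> simp only [force, forceNat_eq]

/-- The analogue of `forceNat` for triples of balls. -/
def forceVec {β : Type*} (X : Vec Ball) (k : Vec Ball → β) : β :=
  X.1.force fun x => X.2.1.force fun y => X.2.2.force fun z => k (x, y, z)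

theorem forceVec_eq {β : Type*} (X : Vec Ball) (k : Vec Ball → β) : forceVec X k = k X := by
  simp only [forceVec, Ball.force_eq]

namespace Enclosure

/-- The analogue of `forceNat` for enclosures. -/
def force {β : Type*} (E : Enclosure) (k : Enclosure → β) : β :=
  match E with
  | ⟨c, t, o, s⟩ => forceVec c fun c => forceVec t fun t => forceVec o fun o => forceVec s fun s =>
      k ⟨c, t, o, s⟩

theorem force_eq {β : Type*} (E : Enclosure) (k : Enclosure → β) : E.force k = k E := by
  simp only [force, forceVec_eq]

/-- The enclosure for `n` more iterations. -/
def run (D : Coeffs Ball) : ℕ → Enclosure → Enclosure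
  | 0, E => E
  | n + 1, E => (E.step D).force (run D n)

theorem run_succ (D : Coeffs Ball) (n : ℕ) (E : Enclosure) :
    E.run D (n + 1) = (E.step D).run D n := by
  rw [run, force_eq]

theorem Encloses.run {E : Enclosure} {φ : Vec ℝ → Vec ℝ} {C : Coeffs ℝ} {D : Coeffs Ball}
    (h : E.Encloses φ) (hC : C ∈ D) (n : ℕ) : (E.run D n).Encloses (C.shift^[n] ∘ φ) := by
  induction n generalizing E φ with
  | zero => exact h
  | succ n ih =>
    rw [run_succ, Function.iterate_succ, Function.comp_assoc]
    exact ih (h.shift hC)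

end Enclosure

end Enclosure

section Crossing

namespace Region

variable {S : Region ℝ} {T : Region Ball}

instance : Membership (Region ℝ) (Region Ball) := ⟨fun T S =>
  S.fp ∈ T.fp ∧ S.p ∈ T.p ∧ S.q ∈ T.q ∧ S.r ∈ T.r ∧ S.κ ∈ T.κ ∧ S.floor ∈ T.floor⟩

open Ball

theorem displacement_mem (hT : S ∈ T) {v : Vec ℝ} {X : Vec Ball} (hv : v ∈ X) :
    S.displacement v ∈ T.displacement X :=
  ⟨sub_mem hv.1 hT.1, sub_mem hv.2.1 hT.1, sub_mem hv.2.2 hT.1⟩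

theorem height_mem (hT : S ∈ T) {v : Vec ℝ} {X : Vec Ball} (hv : v ∈ X) :
    S.height v ∈ T.height X :=
  add_mem (add_mem hv.2.2 (mul_mem hT.2.1 hv.2.1)) (mul_mem hT.2.2.1 hv.1)

theorem gauge_mem (hT : S ∈ T) {v : Vec ℝ} {X : Vec Ball} (hv : v ∈ X) :
    S.gauge v ∈ T.gauge X :=
  add_mem (mul_mem hv.2.2 (add_mem hv.2.2 (mul_mem hT.2.1 hv.2.1)))
    (mul_mem hT.2.2.1 (mul_mem hv.2.1 hv.2.1))

/-- All three entries lie above the floor. -/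
def Above (S : Region ℝ) (v : Vec ℝ) : Prop := S.floor ≤ v.1 ∧ S.floor ≤ v.2.1 ∧ S.floor ≤ v.2.2

/-- The test that all elements of a triple of balls are above the floor. -/
def checkAbove (T : Region Ball) (X : Vec Ball) : Bool :=
  (X.1 - T.floor).pos && (X.2.1 - T.floor).pos && (X.2.2 - T.floor).pos

theorem above_of_check (hT : S ∈ T) {v : Vec ℝ} {X : Vec Ball} (h : T.checkAbove X = true)
    (hv : v ∈ X) : S.Above v := by
  simp only [checkAbove, Bool.and_eq_true] at h
  obtain ⟨⟨h₀, h₁⟩, h₂⟩ := h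
  have hfloor := hT.2.2.2.2.2
  exact ⟨(sub_pos.1 (pos_of_mem h₀ (sub_mem hv.1 hfloor))).le,
    (sub_pos.1 (pos_of_mem h₁ (sub_mem hv.2.1 hfloor))).le,
    (sub_pos.1 (pos_of_mem h₂ (sub_mem hv.2.2 hfloor))).le⟩

end Region

theorem Saddle.attracted_of_iterate_three {C : Coeffs ℝ} {S : Saddle C} {v : Vec ℝ}
    (h : S.region.Above v) (h₃ : S.Attracted (C.shift^[3] v)) : S.Attracted v := by
  simp only [Saddle.Attracted, funext fun n => C.orbit_shift_iterate v 3 n] at h₃ ⊢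
  refine ⟨(tendsto_add_atTop_iff_nat 3).1 h₃.1, fun n => ?_⟩
  match n with
  | 0 => exact h.1
  | 1 => exact h.2.1
  | 2 => exact h.2.2
  | n + 3 => exact h₃.2 n

/-- The image of the cube under `φ` crosses the trapping region of `S` in the last parameter, along
cones on which the order of the phase space is strict. -/
structure Saddle.Crosses {C : Coeffs ℝ} (S : Saddle C) (φ : Vec ℝ → Vec ℝ) : Prop where
  radius_le : ∀ u ∈ cube, S.radius (φ u) ≤ S.R
  above : ∀ u ∈ cube, S.region.Above (φ u)
  height_pos : ∀ u ∈ cube, u.2.2 = 1 → 0 < S.height (φ u)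
  height_lt : ∀ u ∈ cube, u.2.2 = -1 → S.height (φ u) < -S.κ
  cone : ∀ u ∈ cube, ∀ u' ∈ cube, u.1 = u'.1 → |u'.2.1 - u.2.1| ≤ u'.2.2 - u.2.2 →
    u.2.2 < u'.2.2 → (φ u).1 < (φ u').1 ∧ (φ u).2.1 < (φ u').2.1 ∧ (φ u).2.2 < (φ u').2.2

namespace Saddle.Crosses

variable {C : Coeffs ℝ} {S : Saddle C} {φ : Vec ℝ → Vec ℝ}

theorem abs_sub_lt (h : S.Crosses φ) {u u' : Vec ℝ} (hu : u ∈ cube) (hu' : u' ∈ cube)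
    (hτ : u.1 = u'.1) (hne : u.2.2 ≠ u'.2.2) (hatt : S.Attracted (φ u))
    (hatt' : S.Attracted (φ u')) : |u'.2.2 - u.2.2| < |u'.2.1 - u.2.1| := by
  wlog hlt : u.2.2 < u'.2.2 generalizing u u'
  · rw [abs_sub_comm, abs_sub_comm u'.2.1]
    exact this hu' hu hτ.symm hne.symm hatt' hatt (hne.lt_or_gt.resolve_left hlt)
  by_contra! hcone
  rw [abs_of_pos (sub_pos.2 hlt)] at hcone
  exact hatt.not_lt hatt' (h.cone u hu u' hu' hτ hcone hlt)

theorem exists_trapped (h : S.Crosses φ) (hφ : Continuous φ) {τ : ℝ} (hτ : |τ| ≤ 1)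
    {y : Icc (-1 : ℝ) 1 → Icc (-1 : ℝ) 1} (hy : Continuous y) :
    ∃ z, S.Trapped (φ (τ, (y z : ℝ), (z : ℝ))) := by
  have hmem (z : Icc (-1 : ℝ) 1) : ((τ, (y z : ℝ), (z : ℝ)) : Vec ℝ) ∈ cube :=
    mem_cube.2 ⟨hτ, abs_le.2 (y z).2, abs_le.2 z.2⟩
  have := Subtype.preconnectedSpace (isPreconnected_Icc (a := (-1 : ℝ)) (b := 1))
  exact exists_trapped_of_crossing (hφ.comp (by fun_prop)) (fun z => h.radius_le _ (hmem z))
    ⟨⟨-1, by norm_num⟩, h.height_lt _ (hmem _) rfl⟩ ⟨⟨1, by norm_num⟩, h.height_pos _ (hmem _) rfl⟩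

theorem attracted (h : S.Crosses φ) {u : Vec ℝ} (hu : u ∈ cube) (htrap : S.Trapped (φ u)) :
    S.Attracted (φ u) :=
  htrap.attracted (h.above u hu).1

end Saddle.Crosses

namespace Enclosure

/-- The test that an enclosed box crosses a region in the sense of `Saddle.Crosses`. -/
def checkCrosses (T : Region Ball) (E : Enclosure) : Bool :=
  let w := T.height (T.displacement E.center) + (T.height E.t).sweep + (T.height E.o).sweep
  let ws := T.height E.s
  (w + ws).pos && (Ball.exact 0 - T.κ - (w - ws)).pos &&
    (T.r - T.gauge (T.displacement E.hull)).pos && T.checkAbove E.hull &&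
    E.s.1.dominates E.o.1 && E.s.2.1.dominates E.o.2.1 && E.s.2.2.dominates E.o.2.2

open Ball

variable {E : Enclosure} {φ : Vec ℝ → Vec ℝ} {C : Coeffs ℝ} {S : Saddle C} {T : Region Ball}

theorem Encloses.exists_height_eq (h : E.Encloses φ) (hT : S.region ∈ T) {u : Vec ℝ}
    (hu : u ∈ cube) :
    ∃ w ∈ T.height (T.displacement E.center) + (T.height E.t).sweep + (T.height E.o).sweep,
      ∃ ws ∈ T.height E.s, S.height (φ u) = w + u.2.2 * ws := by
  obtain ⟨t, ht, o, ho, s, hs, heq⟩ := h.secant 0 (by simp [mem_cube]) u hu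
  obtain ⟨hτ, hy, -⟩ := mem_cube.1 hu
  rw [sub_zero, sub_eq_iff_eq_add'] at heq
  refine ⟨_, add_mem (add_mem (Region.height_mem hT (Region.displacement_mem hT h.center_mem))
    (mul_mem_sweep hτ (Region.height_mem hT ht))) (mul_mem_sweep hy (Region.height_mem hT ho)),
    _, Region.height_mem hT hs, ?_⟩
  rw [heq]
  simp only [Saddle.height, Region.height, Region.displacement, Prod.fst_add, Prod.snd_add,
    Prod.smul_fst, Prod.smul_snd, smul_eq_mul]
  ring

theorem Encloses.crosses (h : E.Encloses φ) (hT : S.region ∈ T) (hE : E.checkCrosses T = true) :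
    S.Crosses φ := by
  simp only [checkCrosses, Bool.and_eq_true] at hE
  obtain ⟨⟨⟨⟨⟨⟨hpos, hlt⟩, hgauge⟩, habove⟩, hcone₀⟩, hcone₁⟩, hcone₂⟩ := hE
  constructor
  · intro u hu
    exact (S.radius_lt (sub_pos.1 (pos_of_mem hgauge (sub_mem hT.2.2.2.1
      (Region.gauge_mem hT (Region.displacement_mem hT (h.mem_hull hu))))))).le
  · exact fun u hu => Region.above_of_check hT habove (h.mem_hull hu)
  · intro u hu hz
    obtain ⟨w, hw, ws, hws, heq⟩ := h.exists_height_eq hT hu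
    rw [heq, hz, one_mul]
    exact pos_of_mem hpos (add_mem hw hws)
  · intro u hu hz
    obtain ⟨w, hw, ws, hws, heq⟩ := h.exists_height_eq hT hu
    have := pos_of_mem hlt (sub_mem (sub_mem (exact_mem 0) hT.2.2.2.2.1) (sub_mem hw hws))
    rw [heq, hz]
    simp only [Int.cast_zero, zero_div, Saddle.region] at this
    linarith
  · intro u hu u' hu' hτ hyz hz
    obtain ⟨t, -, o, ho, s, hs, heq⟩ := h.secant u hu u' hu'
    have hτ : (u' - u).1 = 0 := sub_eq_zero.2 hτ.symm
    rw [hτ, zero_smul, zero_add] at heq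
    have hz := sub_pos.2 hz
    suffices 0 < (φ u' - φ u).1 ∧ 0 < (φ u' - φ u).2.1 ∧ 0 < (φ u' - φ u).2.2 from
      this.imp sub_pos.1 (.imp sub_pos.1 sub_pos.1)
    rw [heq]
    exact ⟨combination_pos hcone₀ hs.1 ho.1 hyz hz, combination_pos hcone₁ hs.2.1 ho.2.1 hyz hz,
      combination_pos hcone₂ hs.2.2 ho.2.2 hyz hz⟩

end Enclosure

end Crossing

section Box

/-- The triple with entries in units of `2⁻⁴⁰`. -/
noncomputable def real (v : Vec ℤ) : Vec ℝ :=
  (v.1 / 1099511627776, v.2.1 / 1099511627776, v.2.2 / 1099511627776)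

/-- A parallelepiped with edges `2t`, `2o` and `2s`, in units of `2⁻⁴⁰`. The curve of heteroclinic
points runs along `t`, while `s` and `o` cross the stable sets of the recurrence and of its
reversal. -/
structure Box where
  center : Vec ℤ
  t : Vec ℤ
  o : Vec ℤ
  s : Vec ℤ

theorem swap_mem_cube {u : Vec ℝ} (hu : u ∈ cube) : ((u.1, u.2.2, u.2.1) : Vec ℝ) ∈ cube := by
  rw [mem_cube] at *
  exact ⟨hu.1, hu.2.2, hu.2.1⟩

namespace Box

/-- The time reversal of a box. -/
def flip (b : Box) : Box :=
  ⟨Lomeli.flip b.center, Lomeli.flip b.t, Lomeli.flip b.s, Lomeli.flip b.o⟩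

/-- The parametrization of a box by the cube. -/
noncomputable def chart (b : Box) (u : Vec ℝ) : Vec ℝ :=
  real b.center + u.1 • real b.t + u.2.1 • real b.o + u.2.2 • real b.s

/-- The enclosure of the box itself. -/
def enclosure (b : Box) : Enclosure :=
  let exact (v : Vec ℤ) : Vec Ball := (.exact v.1, .exact v.2.1, .exact v.2.2)
  ⟨exact b.center, exact b.t, exact b.o, exact b.s⟩

variable (b : Box)

theorem encloses_chart : b.enclosure.Encloses b.chart := by
  have hexact (v : Vec ℤ) : real v ∈ ((.exact v.1, .exact v.2.1, .exact v.2.2) : Vec Ball) :=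
    ⟨Ball.exact_mem _, Ball.exact_mem _, Ball.exact_mem _⟩
  have hcenter : b.chart 0 = real b.center := by simp [chart]
  refine ⟨hcenter ▸ hexact b.center, fun u _ u' _ =>
    ⟨_, hexact b.t, _, hexact b.o, _, hexact b.s, ?_⟩⟩
  simp only [chart, Prod.fst_sub, Prod.snd_sub]
  module

theorem continuous_chart : Continuous b.chart := by
  unfold chart
  fun_prop

theorem chart_flip (u : Vec ℝ) : b.flip.chart u = Lomeli.flip (b.chart (u.1, u.2.2, u.2.1)) := by
  ext <;> simp only [chart, flip, Lomeli.flip, real, Prod.fst_add, Prod.snd_add, Prod.smul_fst,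
    Prod.smul_snd, smul_eq_mul, Int.cast_neg] <;> ring

end Box

variable {C : Coeffs ℝ} (S : Saddle C) (S' : Saddle C.reverse) (m n : ℕ)

/-- The future of `v` from time `m` on is attracted by `S`, its past before time `-n` by `S'`. -/
def Connecting (v : Vec ℝ) : Prop :=
  S.Attracted (C.shift^[m] v) ∧ S'.Attracted (C.reverse.shift^[n] (flip v))

/-- The future of `v` from time `m` on is trapped by `S`, its past before time `-n` by `S'`. Unlike
`Connecting`, this is a closed condition. -/
def Caught (v : Vec ℝ) : Prop :=
  S.Trapped (C.shift^[m] v) ∧ S'.Trapped (C.reverse.shift^[n] (flip v))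

/-- The future of the box crosses the trapping region of `S`, its past that of `S'`. -/
structure Box.Crosses (b : Box) : Prop where
  future : S.Crosses (C.shift^[m] ∘ b.chart)
  past : S'.Crosses (C.reverse.shift^[n] ∘ b.flip.chart)

theorem Saddle.isClosed_trapped : IsClosed {v | S.Trapped v} := by
  have hradius : Continuous S.radius := by
    unfold radius Region.gauge Region.displacement form
    fun_prop
  simp only [Trapped, ofPred_forall, ofPred_and]
  exact isClosed_iInter fun k =>
    (isClosed_le (hradius.comp (C.continuous_shift.iterate k)) continuous_const).inter
      (isClosed_Icc.preimage (continuous_height.comp (C.continuous_shift.iterate k)))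

theorem isClosed_caught : IsClosed {v | Caught S S' m n v} :=
  (S.isClosed_trapped.preimage (C.continuous_shift.iterate m)).inter
    (S'.isClosed_trapped.preimage ((C.reverse.continuous_shift.iterate n).comp continuous_flip))

namespace Box.Crosses

variable {S S' m n} {b : Box} {u u' : Vec ℝ}

theorem attracted_past (h : b.Crosses S S' m n) (hu : u ∈ cube)
    (htrap : S'.Trapped (C.reverse.shift^[n] (Lomeli.flip (b.chart u)))) :
    S'.Attracted (C.reverse.shift^[n] (Lomeli.flip (b.chart u))) := by
  have := h.past.attracted (swap_mem_cube hu)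
  simp only [Function.comp_apply, chart_flip] at this
  exact this htrap

theorem connecting (h : b.Crosses S S' m n) (hu : u ∈ cube)
    (hcaught : Caught S S' m n (b.chart u)) : Connecting S S' m n (b.chart u) :=
  ⟨h.future.attracted hu hcaught.1, h.attracted_past hu hcaught.2⟩

theorem abs_sub_lt_past (h : b.Crosses S S' m n) (hu : u ∈ cube) (hu' : u' ∈ cube)
    (hτ : u.1 = u'.1) (hne : u.2.1 ≠ u'.2.1)
    (hconn : S'.Attracted (C.reverse.shift^[n] (Lomeli.flip (b.chart u))))
    (hconn' : S'.Attracted (C.reverse.shift^[n] (Lomeli.flip (b.chart u')))) :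
    |u'.2.1 - u.2.1| < |u'.2.2 - u.2.2| := by
  have := h.past.abs_sub_lt (swap_mem_cube hu) (swap_mem_cube hu') hτ hne
  simp only [Function.comp_apply, chart_flip] at this
  exact this hconn hconn'

theorem eq_of_connecting (h : b.Crosses S S' m n) (hu : u ∈ cube) (hu' : u' ∈ cube)
    (hτ : u.1 = u'.1) (hconn : Connecting S S' m n (b.chart u))
    (hconn' : Connecting S S' m n (b.chart u')) : u = u' := by
  have hz : u.2.2 = u'.2.2 := by
    by_contra hne
    have := h.future.abs_sub_lt hu hu' hτ hne hconn.1 hconn'.1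
    by_cases hy : u.2.1 = u'.2.1
    · simp [hy, (abs_nonneg _).not_gt] at this
    · exact this.not_gt (h.abs_sub_lt_past hu hu' hτ hy hconn.2 hconn'.2)
  have hy : u.2.1 = u'.2.1 := by
    by_contra hne
    have := h.abs_sub_lt_past hu hu' hτ hne hconn.2 hconn'.2
    simp [hz, (abs_nonneg _).not_gt] at this
  exact Prod.ext hτ (Prod.ext hy hz)

/-- In a slice of the box the pasts trapped by `S'` form a Lipschitz graph, which the
futures cross. -/
theorem exists_caught (h : b.Crosses S S' m n) {τ : ℝ} (hτ : |τ| ≤ 1) :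
    ∃ u ∈ cube, u.1 = τ ∧ Caught S S' m n (b.chart u) := by
  have mem (y z : Icc (-1 : ℝ) 1) : ((τ, (y : ℝ), (z : ℝ)) : Vec ℝ) ∈ cube :=
    mem_cube.2 ⟨hτ, abs_le.2 y.2, abs_le.2 z.2⟩
  have hpast (z : Icc (-1 : ℝ) 1) : ∃ y : Icc (-1 : ℝ) 1,
      S'.Trapped (C.reverse.shift^[n] (Lomeli.flip (b.chart (τ, y, z)))) := by
    have := h.past.exists_trapped ((C.reverse.continuous_shift.iterate n).comp
      b.flip.continuous_chart) hτ (continuous_const (y := z))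
    simpa only [Function.comp_apply, chart_flip] using this
  choose y hy using hpast
  have hcont : Continuous y := by
    refine (LipschitzWith.of_dist_le_mul (K := 1) fun z z' => ?_).continuous
    rw [NNReal.coe_one, one_mul, dist_comm, dist_comm z]
    obtain heq | hne := eq_or_ne (y z) (y z')
    · rw [heq, dist_self]
      exact dist_nonneg
    · exact (h.abs_sub_lt_past (mem _ z) (mem _ z') rfl (Subtype.coe_ne_coe.2 hne)
        (h.attracted_past (mem _ z) (hy z)) (h.attracted_past (mem _ z') (hy z'))).le
  obtain ⟨z, hz⟩ := h.future.exists_trapped ((C.continuous_shift.iterate m).comp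
    b.continuous_chart) hτ hcont
  exact ⟨_, mem (y z) z, rfl, hz, hy z⟩

end Box.Crosses

end Box

section Tube

theorem exists_continuousOn_section {X Y : Type*} [TopologicalSpace X] [Nonempty X]
    [TopologicalSpace Y] [T2Space Y] {π : X → Y} {K : Set X} (hK : IsCompact K)
    (hπ : ContinuousOn π K) (hinj : InjOn π K) :
    ∃ γ : Y → X, ContinuousOn γ (π '' K) ∧ ∀ y ∈ π '' K, γ y ∈ K ∧ π (γ y) = y := by
  classical
  have hγ (y : Y) (hy : y ∈ π '' K) :
      Function.invFunOn π K y ∈ K ∧ π (Function.invFunOn π K y) = y := Function.invFunOn_pos hy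
  refine ⟨Function.invFunOn π K, continuousOn_iff_isClosed.2 fun A hA =>
    ⟨π '' (K ∩ A), ((hK.inter_right hA).image_of_continuousOn
      (hπ.mono inter_subset_left)).isClosed, ?_⟩, hγ⟩
  ext y
  constructor
  · rintro ⟨hyA, hy⟩
    exact ⟨⟨_, ⟨(hγ y hy).1, hyA⟩, (hγ y hy).2⟩, hy⟩
  · rintro ⟨⟨x, ⟨hxK, hxA⟩, rfl⟩, hy⟩
    refine ⟨?_, hy⟩
    rwa [mem_preimage, hinj (hγ _ hy).1 hxK (hγ _ hy).2]

theorem exists_mem_Icc_succ {f : ℕ → ℝ} {N : ℕ} (hN : 0 < N) {x : ℝ} (hx : x ∈ Icc (f 0) (f N)) :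
    ∃ i < N, x ∈ Icc (f i) (f (i + 1)) := by
  induction N, hN using Nat.le_induction with
  | base => exact ⟨0, zero_lt_one, hx⟩
  | succ N _ ih =>
    obtain h | h := le_total x (f N)
    · obtain ⟨i, hi, hmem⟩ := ih ⟨hx.1, h⟩
      exact ⟨i, hi.trans N.lt_succ_self, hmem⟩
    · exact ⟨N, N.lt_succ_self, h, hx.2⟩

/-- The box with edge `2 (w - v)` that joins the cross sections at `2 v` and `2 w`. The directions
across approximate the stable ones of the recurrence and of its reversal. -/
def slab (v w : Vec ℤ) (r : ℤ) : Box := ⟨v + w, w - v, (0, -4 * r, -r), (0, 5 * r, -4 * r)⟩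

section Slab

variable (v w x : Vec ℤ) (r : ℤ)

theorem slab_chart_fst (u : Vec ℝ) :
    ((slab v w r).chart u).1 = (1 - u.1) * (real v).1 + (1 + u.1) * (real w).1 := by
  simp only [slab, Box.chart, real, Prod.fst_add, Prod.smul_fst, smul_eq_mul, Int.cast_add,
    Int.cast_sub, Prod.fst_sub, Int.cast_zero, zero_div, mul_zero, add_zero]
  ring

theorem slab_chart_one (y : ℝ × ℝ) : (slab v w r).chart (1, y) = (slab w x r).chart (-1, y) := by
  ext <;> simp only [slab, Box.chart, real, Prod.fst_add, Prod.snd_add, Prod.smul_fst,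
    Prod.smul_snd, smul_eq_mul, Int.cast_add, Int.cast_sub, Prod.fst_sub, Prod.snd_sub] <;> ring

theorem slab_self_chart {k : ℤ} (hk : k ≠ 0) (u : Vec ℝ) :
    (slab v v r).chart u = (slab v w (k * r)).chart (-1, u.2.1 / k, u.2.2 / k) := by
  ext <;> simp only [slab, Box.chart, real, Prod.fst_add, Prod.snd_add, Prod.smul_fst,
    Prod.smul_snd, smul_eq_mul, Int.cast_add, Int.cast_sub, Prod.fst_sub, Prod.snd_sub,
    Int.cast_mul, Int.cast_neg, Int.cast_zero] <;> field_simp <;> ring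

end Slab

/-- The union of the first `N` slabs between consecutive nodes. -/
def tube (node : ℕ → Vec ℤ) (r : ℤ) (N : ℕ) : Set (Vec ℝ) :=
  ⋃ i ∈ Iio N, (slab (node i) (node (i + 1)) r).chart '' cube

variable {node : ℕ → Vec ℤ} {r : ℤ} {N : ℕ}

theorem mem_tube {v : Vec ℝ} :
    v ∈ tube node r N ↔ ∃ i < N, ∃ u ∈ cube, (slab (node i) (node (i + 1)) r).chart u = v := by
  simp only [tube, mem_iUnion, mem_Iio, mem_image, exists_prop]

theorem isCompact_tube : IsCompact (tube node r N) :=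
  (finite_Iio N).isCompact_biUnion fun _ _ => isCompact_Icc.image (Box.continuous_chart _)

theorem fst_mem_of_mem_tube (hnode : StrictMono fun i => (real (node i)).1) {v : Vec ℝ}
    (hv : v ∈ tube node r N) : v.1 ∈ Icc (2 * (real (node 0)).1) (2 * (real (node N)).1) := by
  obtain ⟨i, hi, u, hu, rfl⟩ := mem_tube.1 hv
  obtain ⟨hlow, hhigh⟩ := abs_le.1 (mem_cube.1 hu).1
  have hfirst : (real (node 0)).1 ≤ (real (node i)).1 := hnode.monotone i.zero_le
  have hstep : (real (node i)).1 < (real (node (i + 1))).1 := hnode i.lt_succ_self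
  have hlast : (real (node (i + 1))).1 ≤ (real (node N)).1 := hnode.monotone hi
  rw [slab_chart_fst]
  constructor <;> nlinarith

theorem exists_chart_fst_eq (hN : 0 < N) {x : ℝ}
    (hx : x ∈ Icc (2 * (real (node 0)).1) (2 * (real (node N)).1)) :
    ∃ i < N, ∃ τ : ℝ, |τ| ≤ 1 ∧
      (1 - τ) * (real (node i)).1 + (1 + τ) * (real (node (i + 1))).1 = x := by
  obtain ⟨i, hi, hmem⟩ := exists_mem_Icc_succ (f := fun i => 2 * (real (node i)).1) hN hx
  rw [← segment_eq_Icc (hmem.1.trans hmem.2), segment_eq_image] at hmem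
  obtain ⟨θ, hθ, rfl⟩ := hmem
  refine ⟨i, hi, 2 * θ - 1, abs_le.2 ⟨by linarith [hθ.1], by linarith [hθ.2]⟩, ?_⟩
  simp only [smul_eq_mul]
  ring

variable {C : Coeffs ℝ} {S : Saddle C} {S' : Saddle C.reverse} {m n : ℕ}

theorem chart_eq_of_connecting {v w : Vec ℤ} (hvw : (real v).1 < (real w).1)
    (hcross : (slab v w r).Crosses S S' m n) {u u' : Vec ℝ} (hu : u ∈ cube) (hu' : u' ∈ cube)
    (hconn : Connecting S S' m n ((slab v w r).chart u))
    (hconn' : Connecting S S' m n ((slab v w r).chart u'))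
    (heq : ((slab v w r).chart u).1 = ((slab v w r).chart u').1) :
    (slab v w r).chart u = (slab v w r).chart u' := by
  rw [slab_chart_fst, slab_chart_fst] at heq
  have hτ : u.1 = u'.1 := mul_right_cancel₀ (sub_pos.2 hvw).ne' (by linarith)
  rw [hcross.eq_of_connecting hu hu' hτ hconn hconn']

theorem chart_mem_of_fst_eq (hnode : StrictMono fun i => (real (node i)).1) {i j : ℕ} (hij : i < j)
    {u u' : Vec ℝ} (hu : u ∈ cube) (hu' : u' ∈ cube)
    (heq : ((slab (node i) (node (i + 1)) r).chart u).1 =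
      ((slab (node j) (node (j + 1)) r).chart u').1) :
    (slab (node i) (node (i + 1)) r).chart u ∈ (slab (node j) (node (j + 1)) r).chart '' cube := by
  obtain ⟨hτ, hyz⟩ := mem_cube.1 hu
  have hτ : 0 ≤ 1 - u.1 := sub_nonneg.2 (abs_le.1 hτ).2
  have hτ' : 0 ≤ 1 + u'.1 := neg_le_iff_add_nonneg'.1 (abs_le.1 (mem_cube.1 hu').1).1
  have hi : 0 < (real (node (i + 1))).1 - (real (node i)).1 := sub_pos.2 (hnode i.lt_succ_self)
  have hj : 0 < (real (node (j + 1))).1 - (real (node j)).1 := sub_pos.2 (hnode j.lt_succ_self)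
  have hle : (real (node (i + 1))).1 ≤ (real (node j)).1 := hnode.monotone hij
  have hprod := mul_nonneg hτ hi.le
  have hprod' := mul_nonneg hτ' hj.le
  rw [slab_chart_fst, slab_chart_fst] at heq
  have hlast : u.1 = 1 := by
    refine (sub_eq_zero.1 ((mul_eq_zero.1 (?_ : (1 - u.1) * _ = 0)).resolve_right hi.ne')).symm
    linarith
  have hnext : i + 1 = j := hnode.injective (le_antisymm hle (by linarith))
  subst hnext
  refine ⟨(-1, u.2), mem_cube.2 ⟨by simp, hyz⟩, ?_⟩
  rw [← slab_chart_one (node i), ← hlast]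

theorem injOn_fst_connecting (hnode : StrictMono fun i => (real (node i)).1)
    (hcross : ∀ i < N, (slab (node i) (node (i + 1)) r).Crosses S S' m n) :
    InjOn Prod.fst {v ∈ tube node r N | Connecting S S' m n v} := by
  rintro v ⟨hv, hconn⟩ v' ⟨hv', hconn'⟩ heq
  obtain ⟨i, hi, u, hu, hchart⟩ := mem_tube.1 hv
  obtain ⟨j, hj, u', hu', hchart'⟩ := mem_tube.1 hv'
  wlog hij : i ≤ j generalizing v v' i j u u'
  · exact (this hv' hconn' hv hconn heq.symm j hj u' hu' hchart' i hi u hu hchart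
      (le_of_not_ge hij)).symm
  subst hchart'
  obtain ⟨w, hw, rfl⟩ : v ∈ (slab (node j) (node (j + 1)) r).chart '' cube := by
    subst hchart
    obtain rfl | hij := hij.eq_or_lt
    · exact mem_image_of_mem _ hu
    · exact chart_mem_of_fst_eq hnode hij hu hu' heq
  exact chart_eq_of_connecting (hnode j.lt_succ_self) (hcross j hj) hw hu' hconn hconn' heq

theorem exists_arc (hnode : StrictMono fun i => (real (node i)).1)
    (hcross : ∀ i < N, (slab (node i) (node (i + 1)) r).Crosses S S' m n) {q q' : Vec ℝ}
    (hq : q ∈ tube node r N) (hconn : Connecting S S' m n q) (hq' : q' ∈ tube node r N)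
    (hconn' : Connecting S S' m n q') (hlt : q.1 < q'.1) :
    ∃ γ : ℝ → Vec ℝ, ContinuousOn γ (Icc 0 1) ∧ InjOn γ (Icc 0 1) ∧ γ 0 = q ∧ γ 1 = q' ∧
      ∀ s ∈ Icc (0 : ℝ) 1, Connecting S S' m n (γ s) := by
  have hinj := injOn_fst_connecting hnode hcross
  set K := {v ∈ tube node r N | Caught S S' m n v}
  have hK : K ⊆ {v ∈ tube node r N | Connecting S S' m n v} := by
    rintro v ⟨hv, hcaught⟩
    obtain ⟨i, hi, u, hu, rfl⟩ := mem_tube.1 hv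
    exact ⟨hv, (hcross i hi).connecting hu hcaught⟩
  have hcover : Icc q.1 q'.1 ⊆ Prod.fst '' K := by
    intro x hx
    obtain ⟨i₀, hi₀, -⟩ := mem_tube.1 hq
    obtain ⟨i, hi, τ, hτ, rfl⟩ := exists_chart_fst_eq (i₀.zero_le.trans_lt hi₀) (x := x)
      ⟨(fst_mem_of_mem_tube hnode hq).1.trans hx.1, hx.2.trans (fst_mem_of_mem_tube hnode hq').2⟩
    obtain ⟨u, hu, rfl, hcaught⟩ := (hcross i hi).exists_caught hτ
    exact ⟨_, ⟨mem_tube.2 ⟨i, hi, u, hu, rfl⟩, hcaught⟩, slab_chart_fst _ _ _ _⟩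
  obtain ⟨γ, hγ, hγK⟩ := exists_continuousOn_section
    (isCompact_tube.inter_right (isClosed_caught S S' m n)) continuous_fst.continuousOn
    (hinj.mono hK)
  have hγ_fst {v : Vec ℝ} (hv : v ∈ tube node r N) (hconn : Connecting S S' m n v)
      (hmem : v.1 ∈ Icc q.1 q'.1) : γ v.1 = v :=
    hinj (hK (hγK _ (hcover hmem)).1) ⟨hv, hconn⟩ (hγK _ (hcover hmem)).2
  have hline : MapsTo (AffineMap.lineMap q.1 q'.1) (Icc (0 : ℝ) 1) (Icc q.1 q'.1) := fun s hs => by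
    rw [← segment_eq_Icc hlt.le, segment_eq_image_lineMap]
    exact mem_image_of_mem _ hs
  refine ⟨γ ∘ AffineMap.lineMap q.1 q'.1, (hγ.mono hcover).comp
    AffineMap.lineMap_continuous.continuousOn hline, ?_, ?_, ?_, fun s hs =>
    (hK (hγK _ (hcover (hline hs))).1).2⟩
  · refine InjOn.comp (t := Icc q.1 q'.1) (fun x hx y hy h => ?_)
      (AffineMap.lineMap_injective ℝ hlt.ne).injOn hline
    rw [← (hγK x (hcover hx)).2, h, (hγK y (hcover hy)).2]
  · rw [Function.comp_apply, AffineMap.lineMap_apply_zero, hγ_fst hq hconn ⟨le_rfl, hlt.le⟩]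
  · rw [Function.comp_apply, AffineMap.lineMap_apply_one, hγ_fst hq' hconn' ⟨hlt.le, le_rfl⟩]

end Tube

section Covering

/-- The dot product of triples. -/
def dot {R : Type*} [Add R] [Mul R] (v w : Vec R) : R := v.1 * w.1 + v.2.1 * w.2.1 + v.2.2 * w.2.2

/-- The cross product of triples. -/
def cross {R : Type*} [Mul R] [Sub R] (v w : Vec R) : Vec R :=
  (v.2.1 * w.2.2 - v.2.2 * w.2.1, v.2.2 * w.1 - v.1 * w.2.2, v.1 * w.2.1 - v.2.1 * w.1)

/-- Cramer's rule. -/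
theorem dot_cross_smul (t o s x : Vec ℝ) :
    dot t (cross o s) • x =
      dot x (cross o s) • t + dot x (cross s t) • o + dot x (cross t o) • s := by
  ext <;> simp only [dot, cross, Prod.fst_add, Prod.snd_add, Prod.smul_fst, Prod.smul_snd,
    smul_eq_mul] <;> ring

/-- A bound for the dot products of `n` with the differences between elements of `X` and `c`, in
units of `2⁻⁸⁰`. -/
def spread (X : Vec Ball) (c n : Vec ℤ) : ℤ :=
  |dot ((X.1.mid, X.2.1.mid, X.2.2.mid) - c) n| +
    (X.1.rad * |n.1| + X.2.1.rad * |n.2.1| + X.2.2.rad * |n.2.2|)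

theorem dot_real_cross (x : Vec ℝ) (v w : Vec ℤ) :
    dot x (cross (real v) (real w)) = dot x (real (cross v w)) / 1099511627776 := by
  simp only [dot, cross, real]
  push_cast
  ring

theorem abs_dot_sub_real_le {X : Vec Ball} {v : Vec ℝ} (hv : v ∈ X) (c n : Vec ℤ) :
    |dot (v - real c) (real n)| ≤ spread X c n / 1099511627776 ^ 2 := by
  obtain ⟨h₀, h₁, h₂⟩ := hv
  rw [Ball.mem_def] at h₀ h₁ h₂
  rw [le_div_iff₀ (by positivity), ← abs_of_pos (by norm_num : (0 : ℝ) < 1099511627776 ^ 2),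
    ← abs_mul]
  calc _ = |((dot ((X.1.mid, X.2.1.mid, X.2.2.mid) - c) n : ℤ) : ℝ) +
        ((v.1 * 1099511627776 - X.1.mid) * n.1 + (v.2.1 * 1099511627776 - X.2.1.mid) * n.2.1 +
          (v.2.2 * 1099511627776 - X.2.2.mid) * n.2.2)| := by
        simp only [dot, real, Prod.fst_sub, Prod.snd_sub]
        push_cast
        ring_nf
    _ ≤ spread X c n := by
        simp only [spread]
        push_cast
        refine (abs_add_le _ _).trans (add_le_add le_rfl ((abs_add_three _ _ _).trans ?_))
        simp only [abs_mul]
        gcongr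

/-- The test that a box contains all elements of a triple of balls. -/
def Box.covers (b : Box) (X : Vec Ball) : Bool :=
  let det := dot b.t (cross b.o b.s)
  decide (0 < det) && decide (spread X b.center (cross b.o b.s) ≤ det) &&
    decide (spread X b.center (cross b.s b.t) ≤ det) &&
    decide (spread X b.center (cross b.t b.o) ≤ det)

theorem Box.mem_of_covers {b : Box} {X : Vec Ball} (h : b.covers X = true) {v : Vec ℝ}
    (hv : v ∈ X) : v ∈ b.chart '' cube := by
  simp only [covers, Bool.and_eq_true, decide_eq_true_eq] at h
  obtain ⟨⟨⟨hpos, ht⟩, ho⟩, hs⟩ := h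
  set x := v - real b.center
  set det := dot (real b.t) (cross (real b.o) (real b.s)) with hdet
  have hdet_eq : det = (dot b.t (cross b.o b.s) : ℤ) / 1099511627776 ^ 3 := by
    rw [hdet, dot_real_cross]
    simp only [dot, real]
    push_cast
    ring
  have hdet_pos : 0 < det := by
    rw [hdet_eq]
    exact div_pos (by exact_mod_cast hpos) (by positivity)
  have coordinate {y z : Vec ℤ} (hyz : spread X b.center (cross y z) ≤ dot b.t (cross b.o b.s)) :
      |dot x (cross (real y) (real z)) / det| ≤ 1 := by
    rw [abs_div, abs_of_pos hdet_pos, div_le_one hdet_pos, hdet_eq, dot_real_cross, abs_div,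
      abs_of_pos (by norm_num : (0 : ℝ) < 1099511627776), pow_succ, ← div_div]
    gcongr
    refine (abs_dot_sub_real_le hv _ _).trans ?_
    gcongr
  refine ⟨(_, _, _), mem_cube.2 ⟨coordinate ht, coordinate ho, coordinate hs⟩, ?_⟩
  have hcramer : x = _ := (eq_inv_smul_iff₀ hdet_pos.ne').2
    (dot_cross_smul (real b.t) (real b.o) (real b.s) x)
  rw [sub_eq_iff_eq_add'.1 hcramer]
  simp only [chart, smul_add, smul_smul, div_eq_inv_mul, add_assoc]

end Covering

section Saddles

/-- The recurrence of the Lomelí map at the parameters of the theorem. -/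
noncomputable def lomeli : Coeffs ℝ :=
  ⟨44 / 100, 21 / 100, 35 / 100, -30 / 100, 0, -25 / 100⟩

/-- An enclosure of `lomeli`. -/
def lomeliBall : Coeffs Ball :=
  ⟨.ofFrac 44 100, .ofFrac 21 100, .ofFrac 35 100, .ofFrac (-30) 100, .exact 0, .ofFrac (-25) 100⟩

/-- An enclosure of the trapping region of the saddle that attracts the future of the arc. -/
def futureRegion : Region Ball where
  fp := ⟨738888664371, 4⟩
  p := ⟨1052797069189, 1000⟩
  q := ⟨791009834003, 1000⟩
  r := .ofFrac 5625 1000000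
  κ := .ofFrac 113 10000
  floor := ⟨573961920204, 10⟩

/-- An enclosure of the trapping region of the saddle of the reversed recurrence that attracts the
past of the arc. -/
def pastRegion : Region Ball where
  fp := ⟨409035176038, 4⟩
  p := ⟨1142457522948, 1000⟩
  q := ⟨798139667938, 1000⟩
  r := .ofFrac 3025 1000000
  κ := .ofFrac 77 10000
  floor := ⟨288088896982, 10⟩

theorem lomeli_mem : lomeli ∈ lomeliBall := by
  have hτ₂ := Ball.exact_mem 0
  rw [Int.cast_zero, zero_div] at hτ₂
  refine ⟨?_, ?_, ?_, ?_, hτ₂, ?_⟩ <;> exact Ball.ofFrac_mem (by norm_num [lomeli])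

theorem sqrt_discriminant_bounds :
    (1.04403065089 : ℝ) < √(109 / 100) ∧ √(109 / 100) < (1.044030650893 : ℝ) :=
  ⟨Real.lt_sqrt_of_sq_lt (by norm_num), (Real.sqrt_lt' (by norm_num)).2 (by norm_num)⟩

theorem exists_quadratic_root (τ : ℝ) (hτ : τ ^ 2 = 9 / 100) :
    ∃ x : ℝ, x ^ 2 = τ * x + 1 / 4 ∧ 1.04403065089 < 2 * x - τ ∧ 2 * x - τ < 1.044030650893 := by
  obtain ⟨hlow, hhigh⟩ := sqrt_discriminant_bounds
  have hsq := Real.sq_sqrt (show (0 : ℝ) ≤ 109 / 100 by norm_num)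
  exact ⟨(τ + √(109 / 100)) / 2, by linarith, by linarith, by linarith⟩

theorem exists_characteristic_root {A B l u : ℝ} (hl_pos : 0 < l) (hlu : l ≤ u)
    (hl : l ^ 3 ≤ A * l ^ 2 + B * l + 1) (hu : A * u ^ 2 + B * u + 1 ≤ u ^ 3) :
    ∃ m ∈ Icc l u, m⁻¹ ∈ Icc u⁻¹ l⁻¹ ∧ m ^ 3 = A * m ^ 2 + B * m + 1 := by
  have hcont : ContinuousOn (fun m : ℝ => m ^ 3 - (A * m ^ 2 + B * m + 1)) (Icc l u) := by
    fun_prop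
  obtain ⟨m, hm, hzero⟩ := intermediate_value_Icc hlu hcont ⟨sub_nonpos.2 hl, sub_nonneg.2 hu⟩
  have hm_pos := hl_pos.trans_le hm.1
  exact ⟨m, hm, ⟨inv_anti₀ hm_pos hm.2, inv_anti₀ hl_pos hm.1⟩, sub_eq_zero.1 hzero⟩

theorem lomeli_dx_self (y : ℝ) : lomeli.dx y y = (-30 + 109 * y) / 100 := by
  simp only [Coeffs.dx, lomeli]
  ring

theorem lomeli_dy_self (y : ℝ) : lomeli.dy y y = 91 * y / 100 := by
  simp only [Coeffs.dy, lomeli]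
  ring

theorem lomeli_reverse_dx_self (y : ℝ) : lomeli.reverse.dx y y = 91 * y / 100 := by
  simp only [Coeffs.dx, Coeffs.reverse, lomeli]
  ring

theorem lomeli_reverse_dy_self (y : ℝ) : lomeli.reverse.dy y y = (30 + 109 * y) / 100 := by
  simp only [Coeffs.dy, Coeffs.reverse, lomeli]
  ring

theorem exists_future_eigenvalue : ∃ x mu : ℝ, lomeli.quad x x = 0 ∧
    mu ^ 3 = lomeli.dx x x * mu ^ 2 + lomeli.dy x x * mu + 1 ∧
    x ∈ Icc 0.672015325445 0.6720153254465 ∧ 1.390010060905 ≤ mu ∧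
    mu - lomeli.dx x x ∈ Icc 0.9575133561 0.9575133569 ∧
    mu⁻¹ ∈ Icc 0.719419252920 0.719419253235 := by
  obtain ⟨x, hx, hx_lower, hx_upper⟩ := exists_quadratic_root (3 / 10) (by norm_num)
  obtain ⟨mu, ⟨hmu, hmu'⟩, ⟨hinv, hinv'⟩, hchar⟩ := exists_characteristic_root (A := lomeli.dx x x)
    (B := lomeli.dy x x) (l := 1.390010060905) (u := 1.390010061505) (by norm_num) (by norm_num)
    (by rw [lomeli_dx_self, lomeli_dy_self]; linarith)
    (by rw [lomeli_dx_self, lomeli_dy_self]; linarith)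
  norm_num at hx_lower hx_upper hmu hmu' hinv hinv'
  refine ⟨x, mu, ?_, hchar, ?_, ?_, ?_, ?_⟩
  · norm_num [Coeffs.quad, lomeli]
    linarith
  · constructor <;> linarith
  · linarith
  · rw [lomeli_dx_self]
    constructor <;> linarith
  · constructor <;> linarith

theorem exists_future_saddle :
    ∃ S : Saddle lomeli, S.region ∈ futureRegion ∧ 0 < S.fp := by
  obtain ⟨x, mu, hx, hchar, ⟨hx_lower, hx_upper⟩, hmu, ⟨hp_lower, hp_upper⟩,
    hinv_lower, hinv_upper⟩ := exists_future_eigenvalue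
  norm_num at hx_lower hx_upper hmu hp_lower hp_upper hinv_lower hinv_upper
  let S : Saddle lomeli :=
    { fp := x, mu := mu, k := 782 / 1000, R := 3 / 40, κ := 113 / 10000
      fixed := hx
      one_lt_mu := by linarith
      characteristic := hchar
      R_pos := by norm_num
      escape := by linarith
      contract := by
        have : √mu⁻¹ ≤ 0.8486 := Real.sqrt_le_iff.2 (by constructor <;> linarith)
        linarith
      elliptic := by
        have : (mu - lomeli.dx x x) ^ 2 ≤ 0.9575133569 ^ 2 := by gcongr; linarith
        linarith
      a_lt := by norm_num [lomeli]
      dominated := by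
        have : (782 / 1000 * (mu - lomeli.dx x x) - 21 / 100) ^ 2 ≤
            (782 / 1000 * 0.9575133569 - 21 / 100) ^ 2 := by gcongr <;> linarith
        norm_num [lomeli] at this ⊢
        linarith
      a_pos := by norm_num [lomeli]
      b_nonneg := by norm_num [lomeli]
      c_nonneg := by norm_num [lomeli]
      semidefinite := by norm_num [lomeli]
      dx_nonneg := by rw [lomeli_dx_self]; linarith
      dy_nonneg := by rw [lomeli_dy_self]; linarith }
  refine ⟨S, ⟨?_, ?_, ?_, Ball.ofFrac_mem (by norm_num [Saddle.region, S]),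
    Ball.ofFrac_mem (by norm_num [Saddle.region, S]), ?_⟩, by simp only [S]; linarith⟩ <;>
    simp only [Ball.mem_def, Saddle.region, S, futureRegion] <;>
    norm_num only [abs_le] <;> constructor <;> linarith

theorem exists_past_eigenvalue : ∃ x mu : ℝ, lomeli.reverse.quad x x = 0 ∧
    mu ^ 3 = lomeli.reverse.dx x x * mu ^ 2 + lomeli.reverse.dy x x * mu + 1 ∧
    x ∈ Icc 0.372015325445 0.3720153254465 ∧ 1.377593009977 ≤ mu ∧
    mu - lomeli.reverse.dx x x ∈ Icc 1.0390590637 1.0390590645 ∧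
    mu⁻¹ ∈ Icc 0.725903799100 0.725903799430 := by
  obtain ⟨x, hx, hx_lower, hx_upper⟩ := exists_quadratic_root (-3 / 10) (by norm_num)
  obtain ⟨mu, ⟨hmu, hmu'⟩, ⟨hinv, hinv'⟩, hchar⟩ :=
    exists_characteristic_root (A := lomeli.reverse.dx x x)
      (B := lomeli.reverse.dy x x) (l := 1.377593009977) (u := 1.377593010577) (by norm_num)
      (by norm_num) (by rw [lomeli_reverse_dx_self, lomeli_reverse_dy_self]; linarith)
      (by rw [lomeli_reverse_dx_self, lomeli_reverse_dy_self]; linarith)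
  norm_num at hx_lower hx_upper hmu hmu' hinv hinv'
  refine ⟨x, mu, ?_, hchar, ?_, ?_, ?_, ?_⟩
  · norm_num [Coeffs.quad, lomeli, Coeffs.reverse]
    linarith
  · constructor <;> linarith
  · linarith
  · rw [lomeli_reverse_dx_self]
    constructor <;> linarith
  · constructor <;> linarith

theorem exists_past_saddle :
    ∃ S : Saddle lomeli.reverse, S.region ∈ pastRegion ∧ 0 < S.fp := by
  obtain ⟨x, mu, hx, hchar, ⟨hx_lower, hx_upper⟩, hmu, ⟨hp_lower, hp_upper⟩,
    hinv_lower, hinv_upper⟩ := exists_past_eigenvalue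
  norm_num at hx_lower hx_upper hmu hp_lower hp_upper hinv_lower hinv_upper
  let S : Saddle lomeli.reverse :=
    { fp := x, mu := mu, k := 96 / 100, R := 11 / 200, κ := 77 / 10000
      fixed := hx
      one_lt_mu := by linarith
      characteristic := hchar
      R_pos := by norm_num
      escape := by linarith
      contract := by
        have : √mu⁻¹ ≤ 0.855 := Real.sqrt_le_iff.2 (by constructor <;> linarith)
        linarith
      elliptic := by
        have : (mu - lomeli.reverse.dx x x) ^ 2 ≤ 1.0390590645 ^ 2 := by gcongr; linarith
        linarith
      a_lt := by norm_num [lomeli, Coeffs.reverse]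
      dominated := by
        have : (96 / 100 * (mu - lomeli.reverse.dx x x) - 21 / 100) ^ 2 ≤
            (96 / 100 * 1.0390590645 - 21 / 100) ^ 2 := by gcongr <;> linarith
        norm_num [lomeli, Coeffs.reverse] at this ⊢
        linarith
      a_pos := by norm_num [lomeli, Coeffs.reverse]
      b_nonneg := by norm_num [lomeli, Coeffs.reverse]
      c_nonneg := by norm_num [lomeli, Coeffs.reverse]
      semidefinite := by norm_num [lomeli, Coeffs.reverse]
      dx_nonneg := by rw [lomeli_reverse_dx_self]; linarith
      dy_nonneg := by rw [lomeli_reverse_dy_self]; linarith }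
  refine ⟨S, ⟨?_, ?_, ?_, Ball.ofFrac_mem (by norm_num [Saddle.region, S]),
    Ball.ofFrac_mem (by norm_num [Saddle.region, S]), ?_⟩, by simp only [S]; linarith⟩ <;>
    simp only [Ball.mem_def, Saddle.region, S, pastRegion] <;>
    norm_num only [abs_le] <;> constructor <;> linarith

end Saddles

section Connecting

variable {C : Coeffs ℝ} {S : Saddle C} {S' : Saddle C.reverse} {m n : ℕ} {v : Vec ℝ}

theorem Connecting.of_future (hv : S.region.Above (C.shift^[m] v))
    (h : Connecting S S' (m + 3) n v) : Connecting S S' m n v := by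
  refine ⟨Saddle.attracted_of_iterate_three hv ?_, h.2⟩
  rw [← Function.iterate_add_apply, add_comm]
  exact h.1

theorem Connecting.of_past (hv : S'.region.Above (C.reverse.shift^[n] (flip v)))
    (h : Connecting S S' m (n + 3) v) : Connecting S S' m n v := by
  refine ⟨h.1, Saddle.attracted_of_iterate_three hv ?_⟩
  rw [← Function.iterate_add_apply, add_comm]
  exact h.2

theorem Connecting.shift_iterate (h : Connecting S S' m n v) (k : ℕ) :
    Connecting S S' m (n + k) (C.shift^[k] v) := by
  constructor
  · rw [← Function.iterate_add_apply, add_comm, Function.iterate_add_apply]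
    simp only [Saddle.Attracted, funext fun j => C.orbit_shift_iterate (C.shift^[m] v) k j]
    exact ⟨(tendsto_add_atTop_iff_nat k).2 h.1.1, fun j => h.1.2 (j + k)⟩
  · rw [Function.iterate_add_apply, C.reverse_shift_iterate_flip]
    exact h.2

end Connecting

section Verification

variable {C : Coeffs ℝ} {D : Coeffs Ball} {S : Saddle C} {S' : Saddle C.reverse}
  {T T' : Region Ball} {m n : ℕ} {b : Box}

/-- The test that a box crosses the trapping regions enclosed by `T` and `T'`. -/
def Box.check (b : Box) (D : Coeffs Ball) (T T' : Region Ball) (m n : ℕ) : Bool :=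
  (b.enclosure.run D m).checkCrosses T && (b.flip.enclosure.run D.reverse n).checkCrosses T'

theorem Box.crosses_of_check (hC : C ∈ D) (hT : S.region ∈ T) (hT' : S'.region ∈ T')
    (h : b.check D T T' m n = true) : b.Crosses S S' m n := by
  simp only [check, Bool.and_eq_true] at h
  exact ⟨(b.encloses_chart.run hC m).crosses hT h.1,
    (b.flip.encloses_chart.run (Coeffs.reverse_mem hC) n).crosses hT' h.2⟩

theorem Box.above_of_check {S : Region ℝ} (hC : C ∈ D) (hT : S ∈ T)
    (h : T.checkAbove (b.enclosure.run D n).hull = true) {u : Vec ℝ} (hu : u ∈ cube) :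
    S.Above (C.shift^[n] (b.chart u)) :=
  Region.above_of_check hT h ((b.encloses_chart.run hC n).mem_hull hu)

theorem Box.above_flip_of_check {S : Region ℝ} (hC : C ∈ D) (hT : S ∈ T)
    (h : T.checkAbove (b.flip.enclosure.run D n).hull = true) {u : Vec ℝ} (hu : u ∈ cube) :
    S.Above (C.shift^[n] (Lomeli.flip (b.chart u))) := by
  have := Box.above_of_check hC hT h (swap_mem_cube hu)
  rwa [chart_flip] at this

end Verification

section Arc

/-- The value at `i / 256` of the polynomial with coefficients `cs`, rounded down at each step of
Horner's scheme. -/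
def polynomial (cs : List ℤ) (i : ℤ) : ℤ := cs.foldr (fun c acc => c + acc * i / 256) 0

/-- Halves of points on an approximation of the connecting curve as a graph over its first
coordinate, in units of `2 ^ (-40)`; the coefficients interpolate a numerical computation. -/
def node (i : ℕ) : Vec ℤ where
  fst := 225485783040 + 1610612736 * i
  snd := (polynomial [-105495262904, -20787256886, 99708733111, 31889727810, -35823065392,
    -280837156066, 653413796417, -506068056129, 137712701140] i,
    polynomial [-599458089756, -23740651314, 112837215362, -13640640708, 66021677648, 170978307798,
    -469541097422, 385781718740, -106407475731] i)

/-- The pieces of the tube around the approximate connecting curve. -/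
def piece (i : ℕ) : Box := slab (node i) (node (i + 1)) 10485760

/-- The section of the tube through `node 0`, at an eighth of the width of the tube. -/
def initialSection : Box := slab (node 0) (node 0) 1310720

theorem strictMono_node : StrictMono fun i => (real (node i)).1 := by
  refine strictMono_nat_of_lt_succ fun i => ?_
  simp only [real, node]
  gcongr
  lia

set_option maxRecDepth 100000 in
theorem piece_check :
    ∀ i < 225, (piece i).check lomeliBall futureRegion pastRegion 23 21 = true := by
  decide +kernel

set_option maxRecDepth 100000 in
theorem initialSection_check :
    initialSection.check lomeliBall futureRegion pastRegion 29 27 = true := by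
  decide +kernel

set_option maxRecDepth 100000 in
theorem initialSection_above_check :
    ∀ k ∈ [0, 3],
      futureRegion.checkAbove (initialSection.enclosure.run lomeliBall (23 + k)).hull = true ∧
      pastRegion.checkAbove
        (initialSection.flip.enclosure.run lomeliBall.reverse (21 + k)).hull = true := by
  decide +kernel

set_option maxRecDepth 100000 in
theorem piece_covers_image :
    (piece 224).covers (initialSection.enclosure.run lomeliBall 3).hull = true := by
  decide +kernel

variable {S : Saddle lomeli} {S' : Saddle lomeli.reverse}

theorem piece_crosses (hS : S.region ∈ futureRegion) (hS' : S'.region ∈ pastRegion) {i : ℕ}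
    (hi : i < 225) : (piece i).Crosses S S' 23 21 :=
  Box.crosses_of_check lomeli_mem hS hS' (piece_check i hi)

theorem exists_connecting_initialSection (hS : S.region ∈ futureRegion)
    (hS' : S'.region ∈ pastRegion) :
    ∃ u ∈ cube, Connecting S S' 23 21 (initialSection.chart u) := by
  have hcross := Box.crosses_of_check lomeli_mem hS hS' initialSection_check
  obtain ⟨u, hu, -, hcaught⟩ := hcross.exists_caught (τ := 0) (by simp)
  have habove (k : ℕ) (hk : k ∈ [0, 3]) :=
    Box.above_of_check lomeli_mem hS (initialSection_above_check k hk).1 hu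
  have habove' (k : ℕ) (hk : k ∈ [0, 3]) :=
    Box.above_flip_of_check (Coeffs.reverse_mem lomeli_mem) hS'
      (initialSection_above_check k hk).2 hu
  exact ⟨u, hu, (((hcross.connecting hu hcaught).of_future (habove 3 (by simp))).of_future
    (habove 0 (by simp))).of_past (habove' 3 (by simp)) |>.of_past (habove' 0 (by simp))⟩

theorem initialSection_chart_mem {u : Vec ℝ} (hu : u ∈ cube) :
    initialSection.chart u ∈ tube node 10485760 225 := by
  obtain ⟨-, ho, hs⟩ := mem_cube.1 hu
  have abs_div_le {x : ℝ} (hx : |x| ≤ 1) : |x / (8 : ℤ)| ≤ 1 := by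
    rw [abs_le] at hx ⊢
    constructor <;> push_cast <;> linarith
  exact mem_tube.2 ⟨0, by norm_num, (-1, u.2.1 / (8 : ℤ), u.2.2 / (8 : ℤ)),
    mem_cube.2 ⟨by simp, abs_div_le ho, abs_div_le hs⟩,
    (slab_self_chart (node 0) (node 1) 1310720 (by norm_num) u).symm⟩

/-- The arc joins a connecting point of the initial section to its image under the third iterate,
which lies in the last piece of the tube. -/
theorem exists_connecting_arc (hS : S.region ∈ futureRegion) (hS' : S'.region ∈ pastRegion) :
    ∃ γ : ℝ → Vec ℝ, ContinuousOn γ (Icc 0 1) ∧ InjOn γ (Icc 0 1) ∧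
      γ 1 = lomeli.shift^[3] (γ 0) ∧ ∀ s ∈ Icc (0 : ℝ) 1, Connecting S S' 23 21 (γ s) := by
  have hcross (i : ℕ) (hi : i < 225) := piece_crosses hS hS' hi
  obtain ⟨u, hu, hconn⟩ := exists_connecting_initialSection hS hS'
  obtain ⟨u', hu', himage⟩ := Box.mem_of_covers piece_covers_image
    ((initialSection.encloses_chart.run lomeli_mem 3).mem_hull hu)
  rw [Function.comp_apply] at himage
  have hconn' : Connecting S S' 23 21 ((piece 224).chart u') := by
    refine Connecting.of_past ?_ (himage ▸ hconn.shift_iterate 3)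
    have := (hcross 224 (by norm_num)).past.above _ (swap_mem_cube hu')
    rwa [Function.comp_apply, Box.chart_flip] at this
  have hlt : (initialSection.chart u).1 < ((piece 224).chart u').1 := by
    rw [initialSection, piece, slab_chart_fst, slab_chart_fst]
    have hfirst := strictMono_node (show 0 < 224 by norm_num)
    have hlast := strictMono_node (show 224 < 225 by norm_num)
    have := (abs_le.1 (mem_cube.1 hu').1).1
    nlinarith
  obtain ⟨γ, hcont, hinj, hγ₀, hγ₁, hγ⟩ := exists_arc strictMono_node hcross
    (initialSection_chart_mem hu) hconn (mem_tube.2 ⟨224, by norm_num, u', hu', rfl⟩) hconn' hlt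
  exact ⟨γ, hcont, hinj, by rw [hγ₀, hγ₁]; exact himage, hγ⟩

end Arc

section Conjugacy

variable {C : Coeffs ℝ} (S : Saddle C)

/-- The fixed triple of the saddle. -/
def Saddle.triple : Vec ℝ := (S.fp, S.fp, S.fp)

theorem Saddle.shift_triple : C.shift S.triple = S.triple := by
  simp only [Coeffs.shift, triple, S.fixed, add_zero]

variable {S}

theorem Saddle.Attracted.tendsto_shift_iterate {v : Vec ℝ} (h : S.Attracted v) :
    Tendsto (fun n => C.shift^[n] v) atTop (𝓝 S.triple) := by
  simp only [C.shift_iterate_eq]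
  exact h.1.prodMk_nhds
    (((tendsto_add_atTop_iff_nat 1).2 h.1).prodMk_nhds ((tendsto_add_atTop_iff_nat 2).2 h.1))

theorem Saddle.Attracted.tendsto_iterate_semiconj {X : Type*} [TopologicalSpace X] {f : X → X}
    {h : Vec ℝ → X} (hh : Continuous h) (hf : Function.Semiconj h C.shift f) {m : ℕ} {v : Vec ℝ}
    (hv : S.Attracted (C.shift^[m] v)) :
    Tendsto (fun n => f^[n] (h v)) atTop (𝓝 (h S.triple)) := by
  rw [← tendsto_add_atTop_iff_nat m]
  simp only [← (hf.iterate_right _).eq, Function.iterate_add_apply]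
  exact (hh.tendsto _).comp hv.tendsto_shift_iterate

/-- The point of the phase space of the Lomelí map, which lists the latest entry of a triple
first. -/
def toPoint (v : Vec ℝ) : Fin 3 → ℝ := ![v.2.2, v.2.1, v.1]

theorem continuous_toPoint : Continuous toPoint := by
  unfold toPoint
  fun_prop

theorem toPoint_injective : Function.Injective toPoint := fun v w h => by
  simp only [toPoint, Matrix.vecCons_inj, and_true] at h
  exact Prod.ext h.2.2 (Prod.ext h.2.1 h.1)

theorem toPoint_flip_triple_ne {S' : Saddle C.reverse} (hS : 0 < S.fp) (hS' : 0 < S'.fp) :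
    toPoint (flip S'.triple) ≠ toPoint S.triple := fun h => by
  have : -S'.fp = S.fp := congrFun h 0
  linarith

end Conjugacy

theorem exists_heteroclinic_arc {f g : (Fin 3 → ℝ) → Fin 3 → ℝ}
    (hf : Function.Semiconj toPoint lomeli.shift f)
    (hg : Function.Semiconj (toPoint ∘ flip) lomeli.reverse.shift g)
    (hfg : Function.RightInverse g f) :
    ∃ p₁ p₂ : Fin 3 → ℝ, p₁ ≠ p₂ ∧ f p₁ = p₁ ∧ f p₂ = p₂ ∧
      ∃ γ : ℝ → Fin 3 → ℝ, ContinuousOn γ (Icc 0 1) ∧ InjOn γ (Icc 0 1) ∧ γ 1 = f^[3] (γ 0) ∧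
        ∀ s ∈ Icc (0 : ℝ) 1, Tendsto (fun n => f^[n] (γ s)) atTop (𝓝 p₂) ∧
          Tendsto (fun n => g^[n] (γ s)) atTop (𝓝 p₁) := by
  obtain ⟨S, hS, hS_pos⟩ := exists_future_saddle
  obtain ⟨S', hS', hS'_pos⟩ := exists_past_saddle
  obtain ⟨γ, hcont, hinj, hγ, hconn⟩ := exists_connecting_arc hS hS'
  have hg_fixed := (hg S'.triple).symm.trans (congrArg _ S'.shift_triple)
  refine ⟨toPoint (flip S'.triple), toPoint S.triple, toPoint_flip_triple_ne hS_pos hS'_pos,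
    (congrArg f hg_fixed).symm.trans (hfg _), (hf _).symm.trans (congrArg _ S.shift_triple),
    toPoint ∘ γ, continuous_toPoint.comp_continuousOn hcont, toPoint_injective.comp_injOn hinj,
    (congrArg toPoint hγ).trans ((hf.iterate_right 3).eq _), fun s hs =>
    ⟨(hconn s hs).1.tendsto_iterate_semiconj continuous_toPoint hf, ?_⟩⟩
  simpa only [Function.comp_apply, flip_flip] using
    (hconn s hs).2.tendsto_iterate_semiconj (continuous_toPoint.comp continuous_flip) hg

end Lomeli

/-- Existence of heteroclinic arcs for the Lomelí map with parameters
`a = 44/100, b = 21/100, c = 35/100, α = −1/4, τ = −3/10` (Section 4.3.2 of the paper).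
The map `f` is a bijection of `ℝ³` (with explicit inverse `g`), and there exist two
distinct fixed points `p₁ ≠ p₂` and an injective continuous curve `γ : [0,1] → ℝ³` with
`γ(1) = f³(γ(0))` all of whose points are heteroclinic from `p₁` to `p₂`. -/
theorem lomeli_heteroclinic_arc
    (f g : (Fin 3 → ℝ) → (Fin 3 → ℝ))
    (hf : ∀ v, f v =
      ![v 2 + (-1 / 4 : ℝ) + (-3 / 10 : ℝ) * v 0 + (44 / 100 : ℝ) * (v 0) ^ 2 +
          (21 / 100 : ℝ) * v 0 * v 1 + (35 / 100 : ℝ) * (v 1) ^ 2, v 0, v 1])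
    (hg : ∀ v, g v =
      ![v 1, v 2, v 0 - (-1 / 4 : ℝ) - (-3 / 10 : ℝ) * v 1 - (44 / 100 : ℝ) * (v 1) ^ 2 -
          (21 / 100 : ℝ) * v 1 * v 2 - (35 / 100 : ℝ) * (v 2) ^ 2]) :
    Function.Bijective f ∧
    Function.LeftInverse g f ∧ Function.RightInverse g f ∧
    ∃ p1 p2 : Fin 3 → ℝ, p1 ≠ p2 ∧ f p1 = p1 ∧ f p2 = p2 ∧
      ∃ γ : ℝ → (Fin 3 → ℝ),
        ContinuousOn γ (Set.Icc 0 1) ∧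
        Set.InjOn γ (Set.Icc 0 1) ∧
        γ 1 = f^[3] (γ 0) ∧
        ∀ s ∈ Set.Icc (0 : ℝ) 1,
          Tendsto (fun n => f^[n] (γ s)) atTop (nhds p2) ∧
          Tendsto (fun n => g^[n] (γ s)) atTop (nhds p1) := by
  have hgf : Function.LeftInverse g f := fun v => by
    ext i
    match i with
    | 0 | 1 => simp only [hf, hg, Matrix.cons_val]
    | 2 => simp only [hf, hg, Matrix.cons_val]; ring
  have hfg : Function.RightInverse g f := fun v => by
    ext i
    match i with
    | 0 => simp only [hf, hg, Matrix.cons_val]; ring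
    | 1 | 2 => simp only [hf, hg, Matrix.cons_val]
  have hf_conj : Function.Semiconj Lomeli.toPoint Lomeli.lomeli.shift f := fun v => by
    simp only [Lomeli.toPoint, Lomeli.Coeffs.shift, Lomeli.Coeffs.quad, Lomeli.lomeli, hf,
      Matrix.cons_val, Matrix.vecCons_inj, and_true]
    ring
  have hg_conj : Function.Semiconj (Lomeli.toPoint ∘ Lomeli.flip) Lomeli.lomeli.reverse.shift g :=
    fun v => by
      simp only [Lomeli.toPoint, Lomeli.Coeffs.shift, Lomeli.Coeffs.quad, Lomeli.lomeli,
        Lomeli.Coeffs.reverse, Lomeli.flip, hg, Function.comp_apply, Matrix.cons_val,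
        Matrix.vecCons_inj, and_true, true_and]
      ring
  exact ⟨⟨hgf.injective, hfg.surjective⟩, hgf, hfg,
    Lomeli.exists_heteroclinic_arc hf_conj hg_conj hfg⟩
end

section
/- (Zeros of F give heteroclinic points.) Let f : ℝ^k → ℝ^k be a continuous bijection with continuous inverse and fixed points p_1, p_2. Let A_1 : ℝ^u → ℝ^u and A_2 : ℝ^s → ℝ^s be invertible linear maps with operator norms ‖A_1^{−1}‖ < 1 and ‖A_2‖ < 1. Let P_1 : B̄_u → ℝ^k and P_2 : B̄_s → ℝ^k be continuous with P_1(0) = p_1, P_2(0) = p_2, and suppose f^{−1}(P_1(θ)) = P_1(A_1^{−1}θ) for all θ ∈ B̄_u and f(P_2(φ)) = P_2(A_2 φ) for all φ ∈ B̄_s. Fix l_1, l_2 ∈ ℕ and suppose (θ*, φ*) ∈ B̄_u × B̄_s satisfies f^{l_1}(P_1(θ*)) − f^{−l_2}(P_2(φ*)) = 0. Then the point q = f^{l_1}(P_1(θ*)) satisfies f^{l_1+l_2}(P_1(θ*)) = P_2(φ*), lim_{n→∞} f^n(q) = p_2, and lim_{n→∞} f^{−n}(q) = p_1; i.e. q is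 a heteroclinic point from p_1 to p_2. -/
open Filter

/-! Iterating the two conjugacies turns the dynamics along the local manifolds into the powers of
`A₂` and of `A₁⁻¹`, which tend to zero; hence `P₂(φ*)` is forward asymptotic to `p₂` and `P₁(θ*)` is
backward asymptotic to `p₁`. A zero of `F` places both points on the orbit of `q`, and asymptotic
behaviour does not depend on the point of the orbit. -/

open Metric Set Function
open scoped Topology

lemma iterate_apply_eq_apply_iterate_of_mapsTo {α β : Type*} {a : α → α} {b : β → β} {P : α → β}
    {S : Set α} (haS : MapsTo a S S) (hP : ∀ x ∈ S, b (P x) = P (a x)) {x : α} (hx : x ∈ S)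
    (n : ℕ) : b^[n] (P x) = P (a^[n] x) := by
  induction n with
  | zero => rfl
  | succ n ih => rw [iterate_succ_apply', iterate_succ_apply', ih, hP _ (haS.iterate n hx)]

/-- The stable set `Wˢ(p)` of a self-map `f`: the points whose forward orbit converges to `p`. The
unstable set `Wᵘ(p)` of an invertible map is the stable set of its inverse. -/
def stableSet {X : Type*} [TopologicalSpace X] (f : X → X) (p : X) : Set X :=
  {x | Tendsto (fun n => f^[n] x) atTop (𝓝 p)}

section TopologicalSpace

variable {X Y : Type*} [TopologicalSpace X] [TopologicalSpace Y]

lemma iterate_mem_stableSet_iff {f : X → X} {p x : X} (l : ℕ) :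
    f^[l] x ∈ stableSet f p ↔ x ∈ stableSet f p := by
  simp only [stableSet, mem_ofPred_eq, ← iterate_add_apply]
  exact tendsto_add_atTop_iff_nat (f := fun n => f^[n] x) l

lemma apply_mem_stableSet_of_mapsTo {a : X → X} {b : Y → Y} {P : X → Y} {S : Set X} {p x : X}
    (haS : MapsTo a S S) (hP : ∀ y ∈ S, b (P y) = P (a y)) (hPc : ContinuousWithinAt P S p)
    (hx : x ∈ S) (hxp : x ∈ stableSet a p) : P x ∈ stableSet b (P p) := by
  have orbit_tendsto : Tendsto (fun n => a^[n] x) atTop (𝓝[S] p) :=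
    tendsto_nhdsWithin_iff.2 ⟨hxp, Eventually.of_forall fun n => haS.iterate n hx⟩
  exact (hPc.tendsto.comp orbit_tendsto).congr fun n =>
    (iterate_apply_eq_apply_iterate_of_mapsTo haS hP hx n).symm

end TopologicalSpace

section LinearContraction

variable {𝕜 E X : Type*} [NontriviallyNormedField 𝕜] [SeminormedAddCommGroup E] [NormedSpace 𝕜 E]
  [TopologicalSpace X] {A : E →L[𝕜] E}

lemma mapsTo_closedBall_zero_of_opNorm_le_one (hA : ‖A‖ ≤ 1) (r : ℝ) :
    MapsTo A (closedBall 0 r) (closedBall 0 r) := by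
  intro x hx
  rw [mem_closedBall_zero_iff] at hx ⊢
  calc ‖A x‖ ≤ 1 * ‖x‖ := A.le_of_opNorm_le hA x
    _ = ‖x‖ := one_mul _
    _ ≤ r := hx

lemma mem_stableSet_zero_of_opNorm_lt_one (hA : ‖A‖ < 1) (x : E) : x ∈ stableSet A 0 := by
  have pow_tendsto : Tendsto (fun n => A ^ n) atTop (𝓝 0) :=
    tendsto_pow_atTop_nhds_zero_of_norm_lt_one hA
  have apply_tendsto : Tendsto (fun n => (A ^ n) x) atTop (𝓝 0) :=
    ((ContinuousLinearMap.apply 𝕜 E x).continuous.tendsto 0).comp pow_tendsto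
  exact apply_tendsto.congr fun n => congrFun (FunLike.coe_pow_eq_iterate A n) x

lemma apply_mem_stableSet_of_opNorm_lt_one (hA : ‖A‖ < 1) {f : X → X} {P : E → X} {r : ℝ}
    (hPc : ContinuousWithinAt P (closedBall 0 r) 0)
    (hP : ∀ y ∈ closedBall 0 r, f (P y) = P (A y)) {x : E} (hx : x ∈ closedBall 0 r) :
    P x ∈ stableSet f (P 0) :=
  apply_mem_stableSet_of_mapsTo (mapsTo_closedBall_zero_of_opNorm_le_one hA.le r) hP hPc hx
    (mem_stableSet_zero_of_opNorm_lt_one hA x)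

end LinearContraction

/-- `B₁` and `g` stand for the inverses `A₁⁻¹` and `f⁻¹`. -/
theorem zeros_give_heteroclinic_points_general
    {𝕜 E₁ E₂ X : Type*} [NontriviallyNormedField 𝕜]
    [SeminormedAddCommGroup E₁] [NormedSpace 𝕜 E₁] [SeminormedAddCommGroup E₂] [NormedSpace 𝕜 E₂]
    [TopologicalSpace X] {f g : X → X} (hgf : LeftInverse g f) (hfg : RightInverse g f)
    {B₁ : E₁ →L[𝕜] E₁} {A₂ : E₂ →L[𝕜] E₂} (hB₁ : ‖B₁‖ < 1) (hA₂ : ‖A₂‖ < 1)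
    {P₁ : E₁ → X} {P₂ : E₂ → X} {r₁ r₂ : ℝ}
    (hP₁c : ContinuousWithinAt P₁ (closedBall 0 r₁) 0)
    (hP₂c : ContinuousWithinAt P₂ (closedBall 0 r₂) 0)
    (hP₁ : ∀ θ ∈ closedBall 0 r₁, g (P₁ θ) = P₁ (B₁ θ))
    (hP₂ : ∀ φ ∈ closedBall 0 r₂, f (P₂ φ) = P₂ (A₂ φ))
    {l₁ l₂ : ℕ} {θ : E₁} {φ : E₂} (hθ : θ ∈ closedBall 0 r₁) (hφ : φ ∈ closedBall 0 r₂)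
    (hzero : f^[l₁] (P₁ θ) = g^[l₂] (P₂ φ)) :
    f^[l₁ + l₂] (P₁ θ) = P₂ φ ∧
    f^[l₁] (P₁ θ) ∈ stableSet f (P₂ 0) ∧
    f^[l₁] (P₁ θ) ∈ stableSet g (P₁ 0) := by
  have forward : f^[l₂] (f^[l₁] (P₁ θ)) = P₂ φ := by rw [hzero, LeftInverse.iterate hfg l₂]
  have backward : g^[l₁] (f^[l₁] (P₁ θ)) = P₁ θ := hgf.iterate l₁ _
  refine ⟨by rw [add_comm, iterate_add_apply, forward], ?_, ?_⟩
  · rw [← iterate_mem_stableSet_iff l₂, forward]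
    exact apply_mem_stableSet_of_opNorm_lt_one hA₂ hP₂c hP₂ hφ
  · rw [← iterate_mem_stableSet_iff l₁, backward]
    exact apply_mem_stableSet_of_opNorm_lt_one hB₁ hP₁c hP₁ hθ

/-- Zeros of `F` give heteroclinic points (equations (4.1)–(4.2) of the
paper).  If `P₁`, `P₂` parameterize local unstable/stable manifolds of the fixed points
`p₁`, `p₂` of the invertible map `f` (conjugating the dynamics to the linear maps `A₁`
with `‖A₁⁻¹‖ < 1` and `A₂` with `‖A₂‖ < 1`), and `(θ*, φ*)` is a zero of
`F(θ,φ) = f^{l₁}(P₁(θ)) − f^{−l₂}(P₂(φ))`, then `q = f^{l₁}(P₁(θ*))` satisfies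
`f^{l₁+l₂}(P₁(θ*)) = P₂(φ*)` and is heteroclinic from `p₁` to `p₂`. -/
theorem zeros_give_heteroclinic_points
    {k u s : ℕ}
    (f g : (Fin k → ℝ) → (Fin k → ℝ))
    (hfc : Continuous f) (hgc : Continuous g)
    (hgf : Function.LeftInverse g f) (hfg : Function.RightInverse g f)
    (p1 p2 : Fin k → ℝ) (hp1 : f p1 = p1) (hp2 : f p2 = p2)
    (A1 : (Fin u → ℝ) ≃L[ℝ] (Fin u → ℝ)) (A2 : (Fin s → ℝ) ≃L[ℝ] (Fin s → ℝ))
    (hA1 : ‖(A1.symm : (Fin u → ℝ) →L[ℝ] (Fin u → ℝ))‖ < 1)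
    (hA2 : ‖(A2 : (Fin s → ℝ) →L[ℝ] (Fin s → ℝ))‖ < 1)
    (P1 : (Fin u → ℝ) → (Fin k → ℝ)) (P2 : (Fin s → ℝ) → (Fin k → ℝ))
    (hP1c : ContinuousOn P1 (Metric.closedBall 0 1))
    (hP2c : ContinuousOn P2 (Metric.closedBall 0 1))
    (hP10 : P1 0 = p1) (hP20 : P2 0 = p2)
    (hP1 : ∀ θ ∈ Metric.closedBall (0 : Fin u → ℝ) 1, g (P1 θ) = P1 (A1.symm θ))
    (hP2 : ∀ φ ∈ Metric.closedBall (0 : Fin s → ℝ) 1, f (P2 φ) = P2 (A2 φ))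
    (l1 l2 : ℕ) (θs : Fin u → ℝ) (φs : Fin s → ℝ)
    (hθ : θs ∈ Metric.closedBall (0 : Fin u → ℝ) 1)
    (hφ : φs ∈ Metric.closedBall (0 : Fin s → ℝ) 1)
    (hzero : f^[l1] (P1 θs) - g^[l2] (P2 φs) = 0) :
    f^[l1 + l2] (P1 θs) = P2 φs ∧
    Tendsto (fun n => f^[n] (f^[l1] (P1 θs))) atTop (nhds p2) ∧
    Tendsto (fun n => g^[n] (f^[l1] (P1 θs))) atTop (nhds p1) := by
  subst hP10 hP20
  exact zeros_give_heteroclinic_points_general hgf hfg hA1 hA2 (hP1c 0 (by simp)) (hP2c 0 (by simp))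
    hP1 hP2 hθ hφ (sub_eq_zero.1 hzero)
end
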